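/- arXiv:2307.01815 — 3 statements merged into one kernel-verified Lean document; each statement's English description precedes it below -/
import Mathlib

section
/- The equation Y² = X⁵ − 3⁶·5⁷ (that is, Y² = X⁵ − 56953125) has no rational solutions (X, Y) ∈ ℚ × ℚ. -/
/-!
Clearing denominators turns a rational point into an integer solution of
`b ^ 2 + 5 * (3375 * e ^ 5) ^ 2 = a ^ 5` with `b` and `e` coprime. A coprime element of `ℤ[√-5]`
whose norm is a fifth power is itself a fifth power, the class number of `ℤ[√-5]` being two. If `3`
divides `b`, division by `27 * (1 - 4√-5)` up to conjugation, of norm `3 ^ 10`, leaves a fifth power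
whose coefficient of `√-5` is prime to `5`, which is impossible.
Otherwise it gives `675 * e ^ 5 = v * (z ^ 2 - 20 * v ^ 4)` with `z = u ^ 2 - 5 * v ^ 2`, which is
ruled out by Dirichlet's descent for exponent five: `z ^ 2 - 20 * v ^ 4` is a fifth power, hence so
is `z + 2 * v ^ 2 * √5` in `ℤ[φ]`, and comparing coefficients of `√5` produces a smaller equation of
the same shape.
-/

open QuadraticAlgebra

/-! ### Small elements of quadratic rings -/

theorem exists_sq_le_sq_le_dvd_add {n X Y : ℕ} (hn : n ≠ 0) (h : n ^ 2 < (X + 1) * (Y + 1))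
    (p q : ℤ) :
    ∃ u v : ℤ, ¬(u = 0 ∧ v = 0) ∧ u ^ 2 ≤ X ∧ v ^ 2 ≤ Y ∧ (n : ℤ) ∣ p * u + q * v := by
  have : NeZero n := ⟨hn⟩
  have hcard : n < (X.sqrt + 1) * (Y.sqrt + 1) := by
    refine lt_of_pow_lt_pow_left₀ 2 (by positivity) (h.trans_le ?_)
    rw [mul_pow]
    exact Nat.mul_le_mul (Nat.lt_succ_sqrt' X) (Nat.lt_succ_sqrt' Y)
  obtain ⟨⟨i, j⟩, hij, ⟨k, l⟩, hkl, hne, heq⟩ := Finset.exists_ne_map_eq_of_card_lt_of_maps_to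
    (s := Finset.range (X.sqrt + 1) ×ˢ Finset.range (Y.sqrt + 1))
    (t := (Finset.univ : Finset (ZMod n))) (f := fun z ↦ (p : ZMod n) * z.1 + q * z.2)
    (by simpa [ZMod.card] using hcard) (by simp)
  have sq_sub_le {r s Z : ℕ} (hr : r < Z.sqrt + 1) (hs : s < Z.sqrt + 1) :
      ((r : ℤ) - s) ^ 2 ≤ Z :=
    calc ((r : ℤ) - s) ^ 2 ≤ (Z.sqrt : ℤ) ^ 2 := sq_le_sq' (by lia) (by lia)
      _ ≤ Z := mod_cast Nat.sqrt_le' Z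
  simp only [Finset.mem_product, Finset.mem_range] at hij hkl
  refine ⟨i - k, j - l, fun h0 ↦ hne (Prod.ext (by lia) (by lia)),
    sq_sub_le hij.1 hkl.1, sq_sub_le hij.2 hkl.2, ?_⟩
  rw [← ZMod.intCast_zmod_eq_zero_iff_dvd]
  push_cast
  linear_combination heq

section

variable {a b n : ℤ} {α β : QuadraticAlgebra ℤ a b}

theorem isCoprime_im_norm (hα : IsCoprime α.re α.im) : IsCoprime α.im α.norm := by
  have hsq : IsCoprime α.im (α.re ^ 2) := hα.symm.pow_right
  have hnorm : α.norm = α.re ^ 2 + α.im * (b * α.re - a * α.im) := by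
    rw [norm_def]
    ring
  rw [hnorm]
  exact hsq.add_mul_left_right _

theorem dvd_norm_of_dvd_im_mul_star (hα : IsCoprime α.re α.im) (hn : n ∣ α.norm)
    (hβ : n ∣ (β * star α).im) : n ∣ β.norm := by
  have hcop : IsCoprime n (α.im ^ 2) :=
    ((isCoprime_im_norm hα).of_isCoprime_of_dvd_right hn).symm.pow_right
  refine hcop.dvd_of_dvd_mul_left ?_
  have key : α.im ^ 2 * β.norm = β.im ^ 2 * α.norm + (β * star α).im *
      ((β * star α).im - 2 * β.im * α.re - b * β.im * α.im) := by
    simp only [norm_def, im_mul, re_star, im_star]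
    ring
  rw [key]
  exact dvd_add (hn.mul_left _) (hβ.mul_right _)

/- `α.im * β` is congruent to a multiple of `α` modulo `n`, so its `m`-th power times `star α` is
congruent to a multiple of `α * star α` modulo `n ^ m`. -/
theorem pow_dvd_pow_mul_star (hα : IsCoprime α.re α.im) {m : ℕ} (hn : n ^ m ∣ α.norm)
    (hβ : n ∣ (β * star α).im) : (n : QuadraticAlgebra ℤ a b) ^ m ∣ β ^ m * star α := by
  obtain ⟨k, hk⟩ := hβ
  have him : (α.im : QuadraticAlgebra ℤ a b) * β = β.im * α - n * k := by
    rw [← Int.cast_mul, ← hk]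
    ext <;> simp only [re_mul, im_mul, re_sub, im_sub, re_star, im_star, re_intCast, im_intCast,
      Int.cast_eq] <;> ring
  have hnorm : (n : QuadraticAlgebra ℤ a b) ^ m ∣ α * star α := by
    rw [← algebraMap_norm_eq_mul_star, eq_intCast]
    exact_mod_cast map_dvd (Int.castRingHom (QuadraticAlgebra ℤ a b)) hn
  have hcop : IsCoprime ((n : QuadraticAlgebra ℤ a b) ^ m) (α.im ^ m) := by
    have := ((isCoprime_im_norm hα).of_isCoprime_of_dvd_right hn).symm.pow_right (n := m)
    exact_mod_cast this.intCast
  refine hcop.dvd_of_dvd_mul_left ?_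
  have hsub : β.im * α ∣ (β.im * α - n * k) ^ m - (-(n * k : QuadraticAlgebra ℤ a b)) ^ m := by
    convert sub_dvd_pow_sub_pow _ _ m using 1
    ring
  have hmain := hnorm.trans ((mul_dvd_mul_right (dvd_of_mul_left_dvd hsub) (star α)))
  rw [← mul_assoc, ← mul_pow, him]
  rw [sub_mul] at hmain
  refine (dvd_sub_left ?_).1 hmain
  rw [neg_pow, mul_pow]
  exact ⟨(-1) ^ m * k ^ m * star α, by ring⟩

theorem exists_mul_pow_eq_pow_mul (hα : IsCoprime α.re α.im) {m : ℕ} {s h : ℤ} (hn : n ≠ 0)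
    (hαn : α.norm = s * n ^ m) (hβ : n ∣ (β * star α).im) (hβn : β.norm = h * n) :
    ∃ γ : QuadraticAlgebra ℤ a b, γ * β ^ m = h ^ m * α ∧ γ.norm = s * h ^ m := by
  obtain ⟨δ, hδ⟩ := pow_dvd_pow_mul_star hα (Dvd.intro_left s hαn.symm) hβ
  have hstar : star β ^ m * α = n ^ m * star δ := by
    simpa [mul_comm] using congrArg star hδ
  have hββ : β * star β = h * n := by
    rw [← algebraMap_norm_eq_mul_star, hβn]; simp
  have hγ : (n ^ m) • (star δ * β ^ m) = (n ^ m) • (h ^ m * α) := by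
    simp only [zsmul_eq_mul, Int.cast_pow]
    calc (n : QuadraticAlgebra ℤ a b) ^ m * (star δ * β ^ m)
        = (β * star β) ^ m * α := by rw [mul_pow]; linear_combination -β ^ m * hstar
      _ = n ^ m * (h ^ m * α) := by rw [hββ]; ring
  have hnm : n ^ m ≠ 0 := pow_ne_zero m hn
  refine ⟨star δ, smul_right_injective _ hnm hγ, ?_⟩
  have hnorm := congrArg QuadraticAlgebra.norm hδ
  simp only [map_mul, map_pow, QuadraticAlgebra.norm_star, norm_intCast, hαn, hβn] at hnorm
  rw [QuadraticAlgebra.norm_star]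
  exact mul_left_cancel₀ (mul_ne_zero hnm hnm) (by linear_combination -hnorm)

theorem exists_ne_zero_sq_le_dvd_im_mul_star {n X Y : ℕ} (hn : n ≠ 0)
    (h : n ^ 2 < (X + 1) * (Y + 1)) (α : QuadraticAlgebra ℤ a b) :
    ∃ β : QuadraticAlgebra ℤ a b, β ≠ 0 ∧ β.re ^ 2 ≤ X ∧ β.im ^ 2 ≤ Y ∧
      (n : ℤ) ∣ (β * star α).im := by
  obtain ⟨u, v, huv, hu, hv, hdvd⟩ := exists_sq_le_sq_le_dvd_add hn h (-α.im) α.re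
  refine ⟨⟨u, v⟩, fun h0 ↦ huv (by simpa [QuadraticAlgebra.ext_iff] using h0), hu, hv, ?_⟩
  convert hdvd using 1
  rw [im_mul, re_star, im_star]
  ring

end

/-! ### Powers in `ℤ[√-5]` -/

/-- The ring `ℤ[√-5]`; its elements `⟨x, y⟩` stand for `x + y√-5`. -/
abbrev ZSqrtNegFive : Type := QuadraticAlgebra ℤ (-5) 0

namespace ZSqrtNegFive

variable {α β : ZSqrtNegFive}

theorem norm_eq (α : ZSqrtNegFive) : α.norm = α.re ^ 2 + 5 * α.im ^ 2 := by
  rw [norm_def]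
  ring

theorem norm_pos (hα : α ≠ 0) : 0 < α.norm := by
  rw [norm_eq]
  by_contra! hle
  have hre : α.re = 0 := by nlinarith
  have him : α.im = 0 := by nlinarith
  exact hα (QuadraticAlgebra.ext hre him)

theorem two_dvd_of_four_dvd_norm (hα : 4 ∣ α.norm) : 2 ∣ α := by
  have hmod : ∀ x y : ZMod 4, x ^ 2 + 5 * y ^ 2 = 0 → 2 * x = 0 ∧ 2 * y = 0 := by decide
  have hα' : ((4 : ℕ) : ℤ) ∣ α.re ^ 2 + 5 * α.im ^ 2 := norm_eq α ▸ hα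
  rw [← ZMod.intCast_zmod_eq_zero_iff_dvd] at hα'
  have htwo := hmod α.re α.im (mod_cast hα')
  norm_cast at htwo
  simp only [ZMod.intCast_zmod_eq_zero_iff_dvd] at htwo
  exact (algebraMap_dvd_iff (r := (2 : ℤ))).2 ⟨by lia, by lia⟩

theorem eq_one_or_eq_neg_one_of_norm_eq_one (hα : α.norm = 1) : α = 1 ∨ α = -1 := by
  rw [norm_eq] at hα
  have him : α.im = 0 := by nlinarith
  have hre : α.re = 1 ∨ α.re = -1 := by
    rw [him] at hα
    exact sq_eq_one_iff.1 (by linarith)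
  exact hre.imp (fun h ↦ QuadraticAlgebra.ext h him)
    (fun h ↦ QuadraticAlgebra.ext (by simpa using h) (by simpa using him))

theorem isSquare_of_norm_eq_pow {m : ℕ} (hm : Odd m) {c : ℤ} (hα : α.norm = c ^ m) :
    IsSquare (c : ZMod 5) := by
  have : Fact (Nat.Prime 5) := ⟨by norm_num⟩
  have hpow : (c : ZMod 5) ^ m = α.re ^ 2 := by
    have hcast := congrArg (Int.cast : ℤ → ZMod 5) (norm_eq α ▸ hα)
    push_cast at hcast
    have hfive : (5 : ZMod 5) = 0 := rfl
    linear_combination -hcast + (α.im : ZMod 5) ^ 2 * hfive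
  obtain ⟨k, rfl⟩ := hm
  rcases eq_or_ne (c : ZMod 5) 0 with hc | hc
  · simp [hc]
  · refine ⟨α.re / c ^ k, ?_⟩
    field_simp
    linear_combination hpow

theorem odd_of_norm_eq_pow (hα : IsCoprime α.re α.im) {m : ℕ} (hm : 2 ≤ m) {t : ℤ}
    (ht : α.norm = t ^ m) : Odd t := by
  by_contra! heven
  obtain ⟨k, rfl⟩ := (Int.not_odd_iff_even.1 heven).two_dvd
  have hfour : 4 ∣ α.norm := by
    rw [ht]
    exact (Dvd.intro (k ^ 2) (by ring)).trans (pow_dvd_pow _ hm)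
  obtain ⟨hre, him⟩ := (algebraMap_dvd_iff (r := (2 : ℤ))).1 (two_dvd_of_four_dvd_norm hfour)
  exact absurd (hα.isUnit_of_dvd' hre him) (by decide)

theorem exists_norm_eq_mul (hα : IsCoprime α.re α.im) {n : ℕ} (hn : n ≠ 0)
    (hαn : (n : ℤ) ∣ α.norm) :
    ∃ (β : ZSqrtNegFive) (h : ℤ), (n : ℤ) ∣ (β * star α).im ∧ β.norm = h * n ∧ 0 < h ∧ h < 5 := by
  obtain ⟨β, hβ, hre, him, hdvd⟩ := exists_ne_zero_sq_le_dvd_im_mul_star (X := 2 * n) (Y := n / 2)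
    hn (by nlinarith [show n ≤ 2 * (n / 2) + 1 by lia]) α
  obtain ⟨h, hh⟩ := dvd_norm_of_dvd_im_mul_star hα hαn hdvd
  have hpos : (0 : ℤ) < n := by lia
  have hnorm_pos := norm_pos hβ
  have hnorm_lt : β.norm < n * 5 := by
    rw [norm_eq]
    push_cast at hre him
    lia
  rw [hh] at hnorm_pos hnorm_lt
  exact ⟨β, h, hdvd, by rw [hh, mul_comm], pos_of_mul_pos_right hnorm_pos hpos.le,
    lt_of_mul_lt_mul_left hnorm_lt hpos.le⟩

theorem exists_eq_pow_of_norm_eq (hα : IsCoprime α.re α.im) {m : ℕ} (hm : Odd m) {n : ℤ}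
    (hn : n ≠ 0) (hαn : α.norm = n ^ m) (hdvd : n ∣ (β * star α).im) (hβ : β.norm = n) :
    ∃ β : ZSqrtNegFive, α = β ^ m := by
  obtain ⟨γ, hγ, hγn⟩ := exists_mul_pow_eq_pow_mul (s := 1) (h := 1) hα hn (by rw [hαn, one_mul])
    hdvd (by rw [hβ, one_mul])
  rw [Int.cast_one, one_pow, one_mul] at hγ
  rcases eq_one_or_eq_neg_one_of_norm_eq_one (by simpa using hγn) with rfl | rfl
  · exact ⟨β, by rw [← hγ, one_mul]⟩
  · exact ⟨-β, by rw [← hγ, hm.neg_pow, neg_one_mul]⟩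

theorem exists_norm_eq_of_norm_eq_four_mul {n : ℕ} (hn : Odd n) (hdvd : (n : ℤ) ∣ (β * star α).im)
    (hβ : β.norm = 4 * n) :
    ∃ β' : ZSqrtNegFive, (n : ℤ) ∣ (β' * star α).im ∧ β'.norm = n := by
  obtain ⟨β', rfl⟩ := two_dvd_of_four_dvd_norm (Dvd.intro _ hβ.symm)
  have hcop : IsCoprime (n : ℤ) 2 := Nat.isCoprime_iff_coprime.2 hn.coprime_two_right
  have him : (2 * β' * star α).im = 2 * (β' * star α).im := by
    rw [mul_assoc, im_mul]
    simp
  have hnorm : (2 * β').norm = 4 * β'.norm := by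
    rw [map_mul]
    simp [norm_def]
  exact ⟨β', hcop.dvd_of_dvd_mul_left (him ▸ hdvd), by linarith⟩

/- `ℤ[√-5]` has class number two: in the proof, `(β)` is the product of an ideal of norm `n` whose
`m`-th power is `(α)` and an ideal of norm `h < 5`, which has to be principal. -/
theorem exists_eq_pow_of_norm_eq_pow (hα : IsCoprime α.re α.im) {m : ℕ} (hm : Odd m) {t : ℤ}
    (ht : α.norm = t ^ m) : ∃ β : ZSqrtNegFive, α = β ^ m := by
  rcases eq_or_ne m 1 with rfl | hm1
  · exact ⟨α, (pow_one α).symm⟩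
  have hα0 : α ≠ 0 := by
    rintro rfl
    exact not_isCoprime_zero_zero hα
  have htpos : 0 < t := hm.pow_pos_iff.1 (ht ▸ norm_pos hα0)
  lift t to ℕ using htpos.le with n
  have hmpos : 0 < m := hm.pos
  have hodd : Odd n := mod_cast odd_of_norm_eq_pow hα (by lia) ht
  obtain ⟨β, h, hdvd, hβ, hpos, hlt⟩ :=
    exists_norm_eq_mul hα (by lia) (ht ▸ dvd_pow_self (n : ℤ) hmpos.ne')
  have hsq : IsSquare (h : ZMod 5) := by
    obtain ⟨γ, -, hγ⟩ := exists_mul_pow_eq_pow_mul hα htpos.ne' (by rw [ht, one_mul]) hdvd hβ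
    exact isSquare_of_norm_eq_pow hm (by rw [hγ, one_mul])
  obtain rfl | rfl : h = 1 ∨ h = 4 := by
    interval_cases h
    · simp
    · exact absurd hsq (by decide)
    · exact absurd hsq (by decide)
    · simp
  · exact exists_eq_pow_of_norm_eq hα hm htpos.ne' ht hdvd (by rw [hβ, one_mul])
  · obtain ⟨β', hdvd', hβ'⟩ := exists_norm_eq_of_norm_eq_four_mul hodd hdvd hβ
    exact exists_eq_pow_of_norm_eq hα hm htpos.ne' ht hdvd' hβ'

theorem re_pow_five (α : ZSqrtNegFive) :
    (α ^ 5).re = α.re * (α.re ^ 4 - 50 * α.re ^ 2 * α.im ^ 2 + 125 * α.im ^ 4) := by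
  simp only [pow_succ, pow_zero, one_mul, re_mul, im_mul]
  ring

theorem im_pow_five (α : ZSqrtNegFive) :
    (α ^ 5).im = 5 * (α.im * ((α.re ^ 2 - 5 * α.im ^ 2) ^ 2 - 20 * α.im ^ 4)) := by
  simp only [pow_succ, pow_zero, one_mul, re_mul, im_mul]
  ring

end ZSqrtNegFive

/-! ### Fifth powers in `ℤ[φ]` -/

/-- The ring `ℤ[φ]` of integers of `ℚ(√5)`, with `φ ^ 2 = 1 + φ`; its elements `⟨x, y⟩` stand for
`x + y φ`, where `φ` is written `ω`. -/
abbrev GoldenInt : Type := QuadraticAlgebra ℤ 1 1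

namespace GoldenInt

variable {α γ : GoldenInt}

theorem norm_eq (α : GoldenInt) : α.norm = α.re ^ 2 + α.re * α.im - α.im ^ 2 := by
  rw [norm_def]
  ring

theorem norm_ne_zero (hα : α ≠ 0) : α.norm ≠ 0 := by
  intro h0
  rw [norm_eq] at h0
  have hsqrt : (⟨2 * α.re + α.im, α.im⟩ : ℤ√5) = 0 := by
    refine (Zsqrtd.norm_eq_zero (fun n hn ↦ ?_) _).1 ?_
    · have : n < 3 := by nlinarith
      have : -3 < n := by nlinarith
      interval_cases n <;> simp at hn
    · rw [Zsqrtd.norm_def]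
      linear_combination 4 * h0
  obtain ⟨hre, him⟩ := Zsqrtd.ext_iff.1 hsqrt
  simp only [Zsqrtd.re_zero, Zsqrtd.im_zero] at hre him
  have hre' : α.re = 0 := by lia
  exact hα (QuadraticAlgebra.ext hre' him)

theorem exists_norm_eq_isUnit_mul (hα : IsCoprime α.re α.im) {t : ℤ} (ht : t ≠ 0)
    (hdvd : t ∣ α.norm) :
    ∃ (β : GoldenInt) (h : ℤ), IsUnit h ∧ t ∣ (β * star α).im ∧ β.norm = h * t := by
  obtain ⟨β, hβ, hre, him, hβdvd⟩ := exists_ne_zero_sq_le_dvd_im_mul_star (n := t.natAbs)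
    (X := t.natAbs) (Y := t.natAbs) (Int.natAbs_ne_zero.2 ht) (by lia) α
  rw [Int.natAbs_dvd] at hβdvd
  obtain ⟨h, hh⟩ := dvd_norm_of_dvd_im_mul_star hα hdvd hβdvd
  have htpos : 0 < |t| := abs_pos.2 ht
  have hlt : |t| * |h| < |t| * 2 := by
    rw [← abs_mul, ← hh, norm_eq, abs_lt]
    rw [Int.natCast_natAbs] at hre him
    constructor <;> nlinarith [sq_nonneg (β.re - β.im), sq_nonneg (β.re + β.im)]
  have hh0 : h ≠ 0 := by
    rintro rfl
    exact norm_ne_zero hβ (by rw [hh, mul_zero])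
  refine ⟨β, h, ?_, hβdvd, by rw [hh, mul_comm]⟩
  have hpos := abs_pos.2 hh0
  exact Int.isUnit_iff_abs_eq.2 (by linarith [lt_of_mul_lt_mul_left hlt htpos.le])

theorem exists_isUnit_mul_pow_eq (hα : IsCoprime α.re α.im) {m : ℕ} (hm : m ≠ 0) {t : ℤ}
    (ht : α.norm = t ^ m) : ∃ γ β : GoldenInt, IsUnit γ ∧ α = γ * β ^ m := by
  have hα0 : α ≠ 0 := by
    rintro rfl
    exact not_isCoprime_zero_zero hα
  have ht0 : t ≠ 0 := by
    rintro rfl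
    exact norm_ne_zero hα0 (by rw [ht, zero_pow hm])
  obtain ⟨β, h, hh, hdvd, hβ⟩ := exists_norm_eq_isUnit_mul hα ht0 (ht ▸ dvd_pow_self t hm)
  obtain ⟨γ, hγ, hγn⟩ := exists_mul_pow_eq_pow_mul hα ht0 (by rw [ht, one_mul]) hdvd hβ
  have hsq : (h : GoldenInt) * h = 1 := by
    rw [← Int.cast_mul, Int.isUnit_mul_self hh, Int.cast_one]
  refine ⟨h ^ m * γ, β, ?_, ?_⟩
  · refine ((hh.map (Int.castRingHom GoldenInt)).pow m).mul (isUnit_iff_norm_isUnit.2 ?_)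
    rw [hγn, one_mul]
    exact hh.pow m
  · rw [mul_assoc, hγ, ← mul_assoc, ← mul_pow, hsq, one_pow, one_mul]

theorem omega_pow_succ (k : ℕ) :
    (ω : GoldenInt) ^ (k + 1) = ⟨Nat.fib k, Nat.fib (k + 1)⟩ := by
  induction k with
  | zero => exact pow_one ω
  | succ k ih =>
    rw [pow_succ, ih, Nat.fib_add_two]
    ext <;> simp

theorem im_omega_pow (k : ℕ) : ((ω : GoldenInt) ^ k).im = Nat.fib k := by
  cases k with
  | zero => simp
  | succ k => rw [omega_pow_succ]

theorem isUnit_iff (α : GoldenInt) :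
    IsUnit α ↔ α.re ^ 2 + α.re * α.im - α.im ^ 2 = 1 ∨ α.re ^ 2 + α.re * α.im - α.im ^ 2 = -1 := by
  rw [isUnit_iff_norm_isUnit, norm_eq, Int.isUnit_iff]

theorem exists_eq_omega_pow_of_nonneg (u v : ℕ) (h : IsUnit (⟨u, v⟩ : GoldenInt)) :
    ∃ k : ℕ, (⟨u, v⟩ : GoldenInt) = ω ^ k := by
  have hunit := (isUnit_iff _).1 h
  simp only at hunit
  rcases v.eq_zero_or_pos with rfl | hv
  · refine ⟨0, QuadraticAlgebra.ext ?_ (by simp)⟩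
    have hsq : (u : ℤ) ^ 2 = 1 := by
      push_cast at hunit
      rcases hunit with h | h <;> nlinarith
    simpa using hsq
  · have hle : u ≤ v := by
      zify at *
      by_contra! hlt
      rcases hunit with h | h <;> nlinarith
    have heq : (⟨u, v⟩ : GoldenInt) = ω * ⟨(v - u : ℕ), u⟩ := by
      ext <;> simp [hle]
    obtain ⟨k, hk⟩ := exists_eq_omega_pow_of_nonneg (v - u) u (isUnit_of_mul_isUnit_right (heq ▸ h))
    exact ⟨k + 1, by rw [heq, hk, pow_succ']⟩
termination_by u + 2 * v

theorem exists_eq_omega_pow (hα : IsUnit α) :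
    ∃ k : ℕ, α = ω ^ k ∨ α = -ω ^ k ∨ star α = ω ^ k ∨ star α = -ω ^ k := by
  wlog him : 0 ≤ α.im generalizing α
  · obtain ⟨k, hk⟩ := this hα.neg (by rw [im_neg]; lia)
    rw [star_neg, neg_inj, neg_inj, neg_eq_iff_eq_neg, neg_eq_iff_eq_neg] at hk
    exact ⟨k, by tauto⟩
  obtain ⟨u, v⟩ := α
  lift v to ℕ using him
  have hunit := (isUnit_iff _).1 hα
  rcases le_or_gt 0 u with hu | hu
  · lift u to ℕ using hu
    obtain ⟨k, hk⟩ := exists_eq_omega_pow_of_nonneg u v hα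
    exact ⟨k, .inl hk⟩
  · have hle : 0 ≤ -(u + v) := by
      simp only at hunit
      by_contra! hlt
      rcases hunit with h | h <;> nlinarith
    have hstar : -star (⟨u, v⟩ : GoldenInt) = ⟨-(u + v), v⟩ := by
      ext <;> simp
    have hunit' := hα.star.neg
    rw [hstar] at hunit'
    lift -(u + v) to ℕ using hle with w hw
    obtain ⟨k, hk⟩ := exists_eq_omega_pow_of_nonneg w v hunit'
    exact ⟨k, .inr (.inr (.inr (by rw [← hk, ← hstar, neg_neg])))⟩

theorem five_dvd_of_five_dvd_fib {k : ℕ} (hk : 5 ∣ Nat.fib k) : 5 ∣ k := by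
  by_contra hndvd
  have hgcd := Nat.fib_gcd 5 k
  rw [(Nat.Prime.coprime_iff_not_dvd (by norm_num)).2 hndvd, Nat.fib_one] at hgcd
  exact absurd (hgcd ▸ Nat.dvd_gcd dvd_rfl hk) (by decide)

theorem exists_eq_pow_five_of_isUnit (hγ : IsUnit γ) (h5 : 5 ∣ γ.im) :
    ∃ δ : GoldenInt, γ = δ ^ 5 := by
  obtain ⟨k, hk⟩ := exists_eq_omega_pow hγ
  have hfib : 5 ∣ Nat.fib k := by
    zify
    rw [← im_omega_pow]
    rcases hk with rfl | rfl | hk | hk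
    · exact h5
    · simpa using h5
    · simpa [← hk] using h5
    · simpa [← neg_eq_iff_eq_neg.2 hk] using h5
  obtain ⟨j, rfl⟩ := five_dvd_of_five_dvd_fib hfib
  rw [pow_mul', ← Odd.neg_pow (by decide : Odd 5)] at hk
  rcases hk with hk | hk | hk | hk
  · exact ⟨_, hk⟩
  · exact ⟨_, hk⟩
  · exact ⟨_, by rw [← star_star γ, hk, star_pow]⟩
  · exact ⟨_, by rw [← star_star γ, hk, star_pow]⟩

theorem re_pow_five (α : GoldenInt) : (α ^ 5).re = α.re ^ 5 + 10 * α.re ^ 3 * α.im ^ 2 +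
    10 * α.re ^ 2 * α.im ^ 3 + 10 * α.re * α.im ^ 4 + 3 * α.im ^ 5 := by
  simp only [pow_succ, pow_zero, one_mul, re_mul, im_mul]
  ring

theorem im_pow_five (α : GoldenInt) : (α ^ 5).im = 5 * (α.re ^ 4 * α.im +
    2 * α.re ^ 3 * α.im ^ 2 + 4 * α.re ^ 2 * α.im ^ 3 + 3 * α.re * α.im ^ 4 + α.im ^ 5) := by
  simp only [pow_succ, pow_zero, one_mul, re_mul, im_mul]
  ring

theorem two_dvd_im_of_two_dvd_im_pow_five (h : 2 ∣ (α ^ 5).im) : 2 ∣ α.im := by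
  have hmod : ∀ x y : ZMod 2, 5 * (x ^ 4 * y + 2 * x ^ 3 * y ^ 2 + 4 * x ^ 2 * y ^ 3 +
      3 * x * y ^ 4 + y ^ 5) = 0 → y = 0 := by decide
  have hcast := (ZMod.intCast_zmod_eq_zero_iff_dvd _ 2).2 h
  rw [im_pow_five] at hcast
  push_cast at hcast
  exact (ZMod.intCast_zmod_eq_zero_iff_dvd _ 2).1 (hmod _ _ hcast)

theorem exists_eq_pow_five (hα : IsCoprime α.re α.im) {t : ℤ} (ht : α.norm = t ^ 5)
    (h5 : 5 ∣ α.im) : ∃ η : GoldenInt, α = η ^ 5 := by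
  obtain ⟨γ, β, hγ, rfl⟩ := exists_isUnit_mul_pow_eq hα (by norm_num) ht
  have him : 5 ∣ (β ^ 5).im := ⟨_, im_pow_five β⟩
  have hmul : 5 ∣ γ.im * (β ^ 5).re := by
    rw [im_mul] at h5
    exact (dvd_add_right (him.mul_left _)).1 ((dvd_add_left (him.mul_left _)).1 h5)
  have hre : ¬5 ∣ (β ^ 5).re := fun hre ↦ by
    have hdvd : 5 ∣ (γ * β ^ 5).re := by
      rw [re_mul]
      exact dvd_add (hre.mul_left _) (him.mul_left _)
    exact absurd (hα.isUnit_of_dvd' hdvd h5) (by decide)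
  have hprime : Prime (5 : ℤ) := Int.prime_ofNat_iff.2 (by norm_num)
  obtain ⟨δ, rfl⟩ := exists_eq_pow_five_of_isUnit hγ
    ((hprime.dvd_or_dvd hmul).resolve_right hre)
  exact ⟨δ * β, by rw [mul_pow]⟩

theorem exists_eq_of_sq_sub_five_mul_sq_eq_pow_five {x y t : ℤ} (hcop : IsCoprime (x - y) (2 * y))
    (ht : x ^ 2 - 5 * y ^ 2 = t ^ 5) (h5 : 5 ∣ y) :
    ∃ c d : ℤ, x = c * (c ^ 4 + 50 * c ^ 2 * d ^ 2 + 125 * d ^ 4) ∧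
      y = 5 * (d * ((c ^ 2 + 5 * d ^ 2) ^ 2 - 20 * d ^ 4)) := by
  obtain ⟨η, hη⟩ := exists_eq_pow_five (α := ⟨x - y, 2 * y⟩) (t := t) hcop
    (by rw [norm_eq, ← ht]; ring) (h5.mul_left 2)
  obtain ⟨hre, him⟩ := QuadraticAlgebra.ext_iff.1 hη
  obtain ⟨d, hd⟩ := two_dvd_im_of_two_dvd_im_pow_five (Dvd.intro y him)
  simp only [re_pow_five, im_pow_five, hd] at hre him
  have hy : y = 5 * (d * (((η.re + d) ^ 2 + 5 * d ^ 2) ^ 2 - 20 * d ^ 4)) := by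
    refine mul_left_cancel₀ (two_ne_zero' ℤ) ?_
    linear_combination him
  exact ⟨η.re + d, d, by linear_combination hre + hy, hy⟩

end GoldenInt

/-! ### The descent -/

/-- The integer `a` is an `m`-th power up to primes dividing `N`: it becomes an `m`-th power after
multiplication by some `k` all of whose prime divisors divide `N`. -/
def IsPowAwayFrom (N : ℤ) (m : ℕ) (a : ℤ) : Prop :=
  ∃ k w : ℤ, (∃ j : ℕ, k ∣ N ^ j) ∧ k * a = w ^ m

namespace IsPowAwayFrom

variable {N a b : ℤ} {m : ℕ}

theorem exists_eq_pow_and_of_mul (h : IsPowAwayFrom N m (a * b)) (hm : Odd m) (hab : IsCoprime a b)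
    (hN : IsCoprime b N) : (∃ t, b = t ^ m) ∧ IsPowAwayFrom N m a := by
  obtain ⟨k, w, ⟨j, hj⟩, hw⟩ := h
  have hcop : IsCoprime (k * a) b :=
    (hN.pow_right.of_isCoprime_of_dvd_right hj).symm.mul_left hab
  obtain ⟨s, hs⟩ := Int.eq_pow_of_mul_eq_pow_odd_left hcop hm (by rw [mul_assoc, hw])
  exact ⟨Int.eq_pow_of_mul_eq_pow_odd_right hcop hm (by rw [mul_assoc, hw]), k, s, ⟨j, hj⟩, hs⟩

theorem of_mul_sq_eq_mul {k l : ℤ} (h : IsPowAwayFrom N m a) (hm : m ≠ 0) (hk : k ∣ N) (hl : l ∣ N)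
    (hab : k * a ^ 2 = l * b) : IsPowAwayFrom N m b := by
  obtain ⟨r, w, ⟨j, hj⟩, hw⟩ := h
  refine ⟨l * k ^ (m - 1) * r ^ 2, k * w ^ 2, ⟨1 + (m - 1) + j * 2, ?_⟩, ?_⟩
  · rw [pow_add, pow_add, pow_one, pow_mul]
    exact mul_dvd_mul (mul_dvd_mul hl (pow_dvd_pow_of_dvd hk _)) (pow_dvd_pow_of_dvd hj 2)
  · calc l * k ^ (m - 1) * r ^ 2 * b = k ^ (m - 1) * k * (r * a) ^ 2 := by
          linear_combination -k ^ (m - 1) * r ^ 2 * hab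
      _ = (k * w ^ 2) ^ m := by
          rw [pow_sub_one_mul hm, hw]
          ring

end IsPowAwayFrom

/-- The pairs on which the descent runs. The coprimality makes `D` a fifth power up to the primes
`2`, `3`, `5`, and `x ^ 2 - 20 * D ^ 4` an exact fifth power. -/
structure IsDescentPair (x D : ℤ) : Prop where
  isCoprime : IsCoprime x (10 * D)
  five_dvd : 5 ∣ D
  ne_zero : D ≠ 0
  isPowAwayFrom : IsPowAwayFrom 30 5 (D * (x ^ 2 - 20 * D ^ 4))

theorem three_dvd_and_three_dvd_of_three_dvd_sq_add_sq {x y : ℤ} (h : 3 ∣ x ^ 2 + y ^ 2) :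
    3 ∣ x ∧ 3 ∣ y := by
  have hmod : ∀ x y : ZMod 3, x ^ 2 + y ^ 2 = 0 → x = 0 ∧ y = 0 := by decide
  have hcast := (ZMod.intCast_zmod_eq_zero_iff_dvd _ 3).2 h
  push_cast at hcast
  exact (hmod _ _ hcast).imp (ZMod.intCast_zmod_eq_zero_iff_dvd _ 3).1
    (ZMod.intCast_zmod_eq_zero_iff_dvd _ 3).1

theorem isCoprime_sq_sub_twenty_mul_pow_four {x D : ℤ} (h : IsCoprime x (10 * D)) :
    IsCoprime (x ^ 2 - 20 * D ^ 4) (30 * D) := by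
  have hthree : IsCoprime (3 : ℤ) (x ^ 2 - 20 * D ^ 4) := by
    refine (Int.prime_three.coprime_iff_not_dvd).2 fun hdvd ↦ ?_
    have hsum : 3 ∣ x ^ 2 + (D ^ 2) ^ 2 := by
      obtain ⟨k, hk⟩ := hdvd
      exact ⟨k + 7 * D ^ 4, by linear_combination hk⟩
    obtain ⟨hx, hD⟩ := three_dvd_and_three_dvd_of_three_dvd_sq_add_sq hsum
    exact absurd (h.isUnit_of_dvd' hx ((Int.prime_three.dvd_of_dvd_pow hD).mul_left 10)) (by decide)
  have hten : IsCoprime (x ^ 2 - 20 * D ^ 4) (10 * D) := by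
    rw [show x ^ 2 - 20 * D ^ 4 = x ^ 2 + 10 * D * (-2 * D ^ 3) by ring]
    exact h.pow_left.add_mul_left_left _
  rw [show 30 * D = 3 * (10 * D) by ring]
  exact hthree.symm.mul_right hten

theorem isCoprime_sq_add_five_mul_sq {c d : ℤ}
    (h : IsCoprime (c * (c ^ 4 + 50 * c ^ 2 * d ^ 2 + 125 * d ^ 4)) (10 * d)) :
    IsCoprime (c ^ 2 + 5 * d ^ 2) (10 * d) := by
  have hsq : c ^ 4 + 50 * c ^ 2 * d ^ 2 + 125 * d ^ 4 =
      (c ^ 2 + 5 * d ^ 2) ^ 2 + 10 * d * (4 * c ^ 2 * d + 10 * d ^ 3) := by ring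
  rw [hsq] at h
  exact (IsCoprime.pow_left_iff two_pos).1 h.of_mul_left_right.of_add_mul_left_left

theorem sq_lt_sq_of_two_mul_sq_eq {c d D : ℤ} (hD : D ≠ 0)
    (h : 2 * D ^ 2 = 5 * (d * ((c ^ 2 + 5 * d ^ 2) ^ 2 - 20 * d ^ 4))) : d ^ 2 < D ^ 2 := by
  have hle : 5 * d ^ 4 ≤ (c ^ 2 + 5 * d ^ 2) ^ 2 - 20 * d ^ 4 := by
    nlinarith [sq_nonneg (c ^ 2), sq_nonneg (c * d)]
  have hd : 0 < d := by
    have : 0 < D ^ 2 := by positivity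
    by_contra! hd
    nlinarith [mul_nonneg_of_nonpos_of_nonpos hd hd]
  have hpow : d ^ 2 ≤ d ^ 5 := pow_le_pow_right₀ hd (by norm_num)
  nlinarith [mul_le_mul_of_nonneg_left hle hd.le]

namespace IsDescentPair

variable {x D : ℤ}

theorem exists_eq_pow_and_isPowAwayFrom (h : IsDescentPair x D) :
    (∃ t, x ^ 2 - 20 * D ^ 4 = t ^ 5) ∧ IsPowAwayFrom 30 5 D :=
  have hcop := isCoprime_sq_sub_twenty_mul_pow_four h.isCoprime
  h.isPowAwayFrom.exists_eq_pow_and_of_mul (by decide) hcop.of_mul_right_right.symm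
    hcop.of_mul_right_left

theorem exists_two_mul_sq_eq (h : IsDescentPair x D) : ∃ c d : ℤ,
    x = c * (c ^ 4 + 50 * c ^ 2 * d ^ 2 + 125 * d ^ 4) ∧
      2 * D ^ 2 = 5 * (d * ((c ^ 2 + 5 * d ^ 2) ^ 2 - 20 * d ^ 4)) := by
  obtain ⟨⟨t, ht⟩, -⟩ := h.exists_eq_pow_and_isPowAwayFrom
  have hcop : IsCoprime (x - 2 * D ^ 2) (2 * (2 * D ^ 2)) := by
    have htwo : IsCoprime x (2 * D) :=
      h.isCoprime.of_isCoprime_of_dvd_right (mul_dvd_mul_right (by norm_num) D)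
    have hsub : IsCoprime (x - 2 * D ^ 2) (2 * D) := by
      rw [show x - 2 * D ^ 2 = x + 2 * D * -D by ring]
      exact htwo.add_mul_left_left _
    rw [show 2 * (2 * D ^ 2) = (2 * D) ^ 2 by ring]
    exact hsub.pow_right
  exact GoldenInt.exists_eq_of_sq_sub_five_mul_sq_eq_pow_five hcop (by rw [← ht]; ring)
    ((dvd_pow h.five_dvd two_ne_zero).mul_left 2)

theorem exists_smaller (h : IsDescentPair x D) :
    ∃ z d : ℤ, IsDescentPair z d ∧ d.natAbs < D.natAbs := by
  obtain ⟨c, d, hx, hD⟩ := h.exists_two_mul_sq_eq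
  have hxd : IsCoprime x (10 * d) := by
    have hten : IsCoprime x 10 := h.isCoprime.of_mul_right_left
    have hsq : IsCoprime x (10 * D ^ 2) := hten.mul_right h.isCoprime.of_mul_right_right.pow_right
    exact hten.mul_right (hsq.of_isCoprime_of_dvd_right
      ⟨25 * ((c ^ 2 + 5 * d ^ 2) ^ 2 - 20 * d ^ 4), by linear_combination 5 * hD⟩)
  have hz : IsCoprime (c ^ 2 + 5 * d ^ 2) (10 * d) := isCoprime_sq_add_five_mul_sq (hx ▸ hxd)
  have hQ : IsCoprime ((c ^ 2 + 5 * d ^ 2) ^ 2 - 20 * d ^ 4) 5 :=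
    (isCoprime_sq_sub_twenty_mul_pow_four hz).of_isCoprime_of_dvd_right ⟨6 * d, by ring⟩
  refine ⟨c ^ 2 + 5 * d ^ 2, d, ⟨hz, ?_, ?_, ?_⟩,
    Int.natAbs_lt_iff_sq_lt.2 (sq_lt_sq_of_two_mul_sq_eq h.ne_zero hD)⟩
  · obtain ⟨k, hk⟩ := h.five_dvd
    refine hQ.symm.dvd_of_dvd_mul_right ⟨2 * k ^ 2, ?_⟩
    refine mul_left_cancel₀ (show (5 : ℤ) ≠ 0 by norm_num) ?_
    rw [← hD, hk]
    ring
  · rintro rfl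
    exact h.ne_zero (by simpa using hD)
  · exact h.exists_eq_pow_and_isPowAwayFrom.2.of_mul_sq_eq_mul (by norm_num) (by norm_num)
      (by norm_num) hD

end IsDescentPair

theorem not_isDescentPair (x D : ℤ) : ¬IsDescentPair x D := fun h ↦
  have ⟨z, d, hd, _⟩ := h.exists_smaller
  not_isDescentPair z d hd
termination_by D.natAbs

/-! ### Integer and rational points -/

section PrimePowers

theorem pow_succ_dvd_of_pow_dvd_pow {M : Type*} [CommMonoidWithZero M] [IsCancelMulZero M]
    {p b : M} (hp : Prime p) {k m n : ℕ} (h : p ^ k ∣ b ^ n) (hlt : n * m < k) :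
    p ^ (m + 1) ∣ b := by
  rw [pow_dvd_iff_le_emultiplicity, emultiplicity_pow hp] at h
  rw [pow_dvd_iff_le_emultiplicity]
  by_contra! hm
  have hle : emultiplicity p b ≤ m := Order.le_of_lt_add_one (mod_cast hm)
  have hkn : (k : ℕ∞) ≤ n * m := h.trans (by gcongr)
  exact hlt.not_ge (mod_cast hkn)

variable {R : Type*} [CommRing R] [IsDomain R] {p a b c : R}

theorem cube_dvd_and_sq_dvd_of_sq_add_pow_six_mul_eq (hp : Prime p) (hb : p ∣ b)
    (h : b ^ 2 + p ^ 6 * c = a ^ 5) : p ^ 3 ∣ b ∧ p ^ 2 ∣ a := by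
  have ha : p ∣ a := hp.dvd_of_dvd_pow (h ▸ dvd_add (dvd_pow hb two_ne_zero) ⟨p ^ 5 * c, by ring⟩)
  have hb3 : p ^ 3 ∣ b := by
    refine pow_succ_dvd_of_pow_dvd_pow hp (k := 5) (n := 2) (m := 2) ?_ (by norm_num)
    exact (dvd_add_left ⟨p * c, by ring⟩).1 (h ▸ pow_dvd_pow_of_dvd ha 5)
  have hb6 : p ^ 6 ∣ b ^ 2 := by
    simpa [← pow_mul] using pow_dvd_pow_of_dvd hb3 2
  exact ⟨hb3, pow_succ_dvd_of_pow_dvd_pow hp (h ▸ dvd_add hb6 (dvd_mul_right _ _)) (by norm_num)⟩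

theorem dvd_of_sq_add_pow_seven_mul_eq (hp : Prime p) (hb : p ∣ b)
    (h : b ^ 2 + p ^ 7 * c = a ^ 5) : p ∣ c := by
  obtain ⟨-, a', rfl⟩ := cube_dvd_and_sq_dvd_of_sq_add_pow_six_mul_eq (c := p * c) hp hb
    (by rw [← h]; ring)
  have hb7 : p ^ 7 ∣ b ^ 2 := ⟨p ^ 3 * a' ^ 5 - c, by linear_combination h⟩
  obtain ⟨b', rfl⟩ := pow_succ_dvd_of_pow_dvd_pow (m := 3) hp hb7 (by norm_num)
  refine ⟨p ^ 2 * a' ^ 5 - b' ^ 2, mul_left_cancel₀ (pow_ne_zero 7 hp.ne_zero) ?_⟩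
  linear_combination h

end PrimePowers

section IntegerEquation

variable {a b e y : ℤ}

theorem isDescentPair_of_mul_pow_five_eq {u v : ℤ} (hodd : Odd (u ^ 2 + 5 * v ^ 2))
    (hcop : IsCoprime u (5 * v)) (he : e ≠ 0)
    (h : 675 * e ^ 5 = v * ((u ^ 2 - 5 * v ^ 2) ^ 2 - 20 * v ^ 4)) :
    IsDescentPair (u ^ 2 - 5 * v ^ 2) v := by
  have hten : IsCoprime (u ^ 2 - 5 * v ^ 2) (10 * v) := by
    have htwo : IsCoprime (u ^ 2 - 5 * v ^ 2) 2 := by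
      refine (Int.prime_two.coprime_iff_not_dvd.2 fun hdvd ↦ ?_).symm
      have hdvd' : 2 ∣ u ^ 2 + 5 * v ^ 2 := by
        rw [show u ^ 2 + 5 * v ^ 2 = u ^ 2 - 5 * v ^ 2 + 2 * (5 * v ^ 2) by ring]
        exact dvd_add hdvd (dvd_mul_right _ _)
      exact Int.not_even_iff_odd.2 hodd (even_iff_two_dvd.2 hdvd')
    have hfive : IsCoprime (u ^ 2 - 5 * v ^ 2) (5 * v) := by
      rw [show u ^ 2 - 5 * v ^ 2 = u ^ 2 + 5 * v * -v by ring]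
      exact hcop.pow_left.add_mul_left_left _
    rw [show 10 * v = 2 * (5 * v) by ring]
    exact htwo.mul_right hfive
  refine ⟨hten, ?_, ?_, 675 ^ 4, 675 * e, ⟨12, by norm_num⟩, ?_⟩
  · have hR : IsCoprime ((u ^ 2 - 5 * v ^ 2) ^ 2 - 20 * v ^ 4) 5 :=
      (isCoprime_sq_sub_twenty_mul_pow_four hten).of_isCoprime_of_dvd_right ⟨6 * v, by ring⟩
    exact hR.symm.dvd_of_dvd_mul_right ⟨135 * e ^ 5, by linear_combination -h⟩
  · rintro rfl
    exact he (by simpa using h)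
  · rw [← h]
    ring

theorem sq_add_five_mul_sq_ne_pow_five (hcop : IsCoprime b (15 * e)) (he : e ≠ 0) :
    b ^ 2 + 5 * (3375 * e ^ 5) ^ 2 ≠ a ^ 5 := by
  intro h
  have hcop' : IsCoprime b (3375 * e ^ 5) := by
    rw [show (3375 : ℤ) * e ^ 5 = 15 ^ 3 * e ^ 5 by norm_num]
    exact hcop.of_mul_right_left.pow_right.mul_right hcop.of_mul_right_right.pow_right
  have hnorm : (⟨b, 3375 * e ^ 5⟩ : ZSqrtNegFive).norm = a ^ 5 := by
    rw [ZSqrtNegFive.norm_eq, h]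
  have hodd : Odd (a ^ 5) := (ZSqrtNegFive.odd_of_norm_eq_pow hcop' (by norm_num) hnorm).pow
  obtain ⟨β, hβ⟩ := ZSqrtNegFive.exists_eq_pow_of_norm_eq_pow hcop' (by decide) hnorm
  rw [← hnorm, hβ, map_pow, ZSqrtNegFive.norm_eq, Int.odd_pow' (by norm_num)] at hodd
  have hb : b = β.re * (β.re ^ 4 - 50 * β.re ^ 2 * β.im ^ 2 + 125 * β.im ^ 4) :=
    (congrArg re hβ).trans (ZSqrtNegFive.re_pow_five β)
  have he5 : 3375 * e ^ 5 = 5 * (β.im * ((β.re ^ 2 - 5 * β.im ^ 2) ^ 2 - 20 * β.im ^ 4)) :=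
    (congrArg im hβ).trans (ZSqrtNegFive.im_pow_five β)
  have hβcop : IsCoprime β.re (5 * β.im) := by
    rw [hb, he5, ← mul_assoc] at hcop'
    exact hcop'.of_mul_left_left.of_mul_right_left
  exact not_isDescentPair _ _ (isDescentPair_of_mul_pow_five_eq hodd hβcop he (by linarith))

theorem sq_add_five_mul_sq_ne_eighty_one_mul_pow_five (hcop : IsCoprime b y) (hy : 5 ∣ y) :
    b ^ 2 + 5 * y ^ 2 ≠ 81 * a ^ 5 := by
  intro h
  wlog hndvd : ¬3 ∣ b + 20 * y generalizing b
  · push Not at hndvd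
    refine this (b := -b) hcop.neg_left (by rw [← h]; ring) fun hdvd ↦ ?_
    have hy3 : 3 ∣ y := by lia
    have hb3 : 3 ∣ b := by lia
    exact absurd (hcop.isUnit_of_dvd' hb3 hy3) (by decide)
  have hdvd : (3 : ℤ) ^ 4 ∣ b - 20 * y := by
    -- `20 ^ 2 = 400` is congruent to `-5` modulo `3 ^ 4`.
    refine Int.prime_three.pow_dvd_of_dvd_mul_right 4 hndvd ⟨a ^ 5 - 5 * y ^ 2, ?_⟩
    linear_combination h
  obtain ⟨z, hz⟩ := hdvd
  obtain rfl : b = 20 * y + 81 * z := by linarith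
  have hnorm : (⟨z, y + 4 * z⟩ : ZSqrtNegFive).norm = a ^ 5 := by
    rw [ZSqrtNegFive.norm_eq]
    linarith
  have hcop' : IsCoprime z (y + 4 * z) := by
    have hzy : IsCoprime (81 * z) y := hcop.of_mul_add_right_left
    exact (IsCoprime.add_mul_right_right_iff).2 hzy.of_mul_left_right
  obtain ⟨β, hβ⟩ := ZSqrtNegFive.exists_eq_pow_of_norm_eq_pow hcop' (by decide) hnorm
  have him : 5 ∣ y + 4 * z :=
    Dvd.intro _ ((ZSqrtNegFive.im_pow_five β).symm.trans (congrArg im hβ).symm)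
  have hb5 : 5 ∣ 20 * y + 81 * z := by lia
  exact absurd (hcop.isUnit_of_dvd' hb5 hy) (by decide)

theorem isCoprime_five_of_sq_add_eq_pow_five (hcop : IsCoprime b e)
    (h : b ^ 2 + 5 * (3375 * e ^ 5) ^ 2 = a ^ 5) : IsCoprime b 5 := by
  have hprime : Prime (5 : ℤ) := Int.prime_ofNat_iff.2 (by norm_num)
  refine (hprime.coprime_iff_not_dvd.2 fun hdvd ↦ ?_).symm
  have h5 : 5 ∣ 3 ^ 6 * e ^ 10 :=
    dvd_of_sq_add_pow_seven_mul_eq hprime hdvd (by rw [← h]; ring)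
  have he : 5 ∣ e := hprime.dvd_of_dvd_pow ((hprime.dvd_or_dvd h5).resolve_left (by norm_num))
  exact absurd (hcop.isUnit_of_dvd' hdvd he) (by decide)

theorem isCoprime_three_of_sq_add_eq_pow_five (hcop : IsCoprime b e)
    (h : b ^ 2 + 5 * (3375 * e ^ 5) ^ 2 = a ^ 5) : IsCoprime b 3 := by
  refine (Int.prime_three.coprime_iff_not_dvd.2 fun hdvd ↦ ?_).symm
  have hfive := isCoprime_five_of_sq_add_eq_pow_five hcop h
  obtain ⟨⟨b', rfl⟩, a', rfl⟩ := cube_dvd_and_sq_dvd_of_sq_add_pow_six_mul_eq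
    (c := 5 * (125 * e ^ 5) ^ 2) Int.prime_three hdvd (by rw [← h]; ring)
  have hcop' : IsCoprime b' (125 * e ^ 5) := by
    rw [show (125 : ℤ) * e ^ 5 = 5 ^ 3 * e ^ 5 by norm_num]
    exact hfive.of_mul_left_right.pow_right.mul_right hcop.of_mul_left_right.pow_right
  exact sq_add_five_mul_sq_ne_eighty_one_mul_pow_five hcop' ⟨25 * e ^ 5, by ring⟩
    (a := a') (by linarith)

end IntegerEquation

theorem exists_int_of_sq_eq_pow_five_add {X Y : ℚ} {k : ℤ} (h : Y ^ 2 = X ^ 5 + k) :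
    ∃ a b e : ℤ, e ≠ 0 ∧ IsCoprime b e ∧ b ^ 2 = a ^ 5 + k * e ^ 10 := by
  have hden : Y.den ^ 2 = X.den ^ 5 := by
    rw [← Rat.den_pow, ← Rat.den_pow, h, Rat.add_intCast_den]
  obtain ⟨e, hY, hX⟩ := Nat.exists_eq_pow_of_exponent_coprime_of_pow_eq_pow (by norm_num) hden
  have he : e ≠ 0 := by
    rintro rfl
    exact Y.den_nz (by rw [hY]; norm_num)
  refine ⟨X.num, Y.num, e, mod_cast he, ?_, ?_⟩
  · have hcop := Y.isCoprime_num_den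
    rw [hY, Nat.cast_pow] at hcop
    exact (IsCoprime.pow_right_iff (by norm_num)).1 hcop
  · rw [← Rat.num_div_den X, ← Rat.num_div_den Y, hX, hY] at h
    push_cast at h
    field_simp at h
    rw [mul_comm k]
    exact_mod_cast h

theorem no_rational_points_case2 (X Y : ℚ) :
    Y ^ 2 ≠ X ^ 5 - 3 ^ 6 * 5 ^ 7 := by
  intro h
  obtain ⟨a, b, e, he, hcop, heq⟩ := exists_int_of_sq_eq_pow_five_add (X := X) (Y := Y)
    (k := -(3 ^ 6 * 5 ^ 7)) (by rw [h]; push_cast; ring)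
  have heq' : b ^ 2 + 5 * (3375 * e ^ 5) ^ 2 = a ^ 5 := by linear_combination heq
  have hthree : IsCoprime b 3 := isCoprime_three_of_sq_add_eq_pow_five hcop heq'
  have hfive : IsCoprime b 5 := isCoprime_five_of_sq_add_eq_pow_five hcop heq'
  exact sq_add_five_mul_sq_ne_pow_five ((hthree.mul_right hfive).mul_right hcop) he heq'
end

section
/- The equation Y² = X⁵ − 2⁴·3⁶·5⁷ (that is, Y² = X⁵ − 911250000) has no rational solutions (X, Y) ∈ ℚ × ℚ. -/
/-!
Clearing denominators gives coprime integers `a`, `b ≠ 0` and an integer `c` with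
`c² + 2⁴·3⁶·5⁷·b¹⁰ = a⁵`, whose left-hand side is a norm from `ℤ[√-5]`. Removing the common
factors of `a` with `2` and `3` leaves an element `α` of norm `k * g² * A⁵` with `k ∈ {1, 2}` and
`g ∈ {1, 9}`. Hermite reduction finds in the ideal `(A, α)` an element `β` of norm `A * j` with
`j ∈ {1, 2}`; since the coefficient of `√-5` in `α` is divisible by `5`, comparison of norms gives
`g * β⁵ = ±k² * α`. This replaces the ideal class group of `ℤ[√-5]`.

If `3 ∣ a` (`g = 9`), comparing coefficients of `√-5` contradicts the coprimality of `a` and `b`.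
Otherwise `β = x + y√-5` satisfies `y * Q(x, y) = 2700 * b⁵` with `Q(x, y) = x⁴ - 10x²y² + 5y⁴`,
and Dirichlet's method for Fermat's equation of exponent five applies: `Q(x, y)` is the norm of
`(x² - 5y²) + 2y²√5`, and up to the primes `2`, `3`, `5` both `y` and `Q(x, y)` are fifth powers.
If `x` and `y` have opposite parity, then `(x² - 5y²) + 2y²√5` is a fifth power in `ℤ[√5]`, and
the coefficient of `√5` yields a smaller pair of the same kind, with `+10` in place of `-10`. If
both are odd, halving first leads instead to a square `x⁴ + 10x²y² + 5y⁴` with `x` even and `y`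
odd, which is impossible modulo `8`.
-/

/-! ### Elements of small norm in the ideals of `ℤ√d` -/

section SmallNorm

theorem exists_four_mul_sq_sub_mul_le {a : ℤ} (ha : a ≠ 0) (b : ℤ) :
    ∃ q : ℤ, 4 * (b - a * q) ^ 2 ≤ a ^ 2 := by
  refine ⟨round ((b : ℚ) / a), ?_⟩
  have ha' : (a : ℚ) ≠ 0 := by exact_mod_cast ha
  set q := round ((b : ℚ) / a)
  have hround : ((b : ℚ) / a - q) ^ 2 ≤ (1 / 2) ^ 2 :=
    sq_le_sq' (abs_le.1 (abs_sub_round _)).1 (abs_le.1 (abs_sub_round _)).2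
  have hscale : (b - a * q : ℚ) = a * ((b : ℚ) / a - q) := by field_simp
  have : 4 * (b - a * q : ℚ) ^ 2 ≤ a ^ 2 := by
    rw [hscale]
    nlinarith [mul_le_mul_of_nonneg_left hround (sq_nonneg (a : ℚ))]
  exact_mod_cast this

variable {d : ℤ}

-- Hermite reduction: centring `b` modulo `a` makes `|c| < |a|`, and then the outer coefficients
-- trade places.
theorem exists_quadratic_value_three_mul_sq_le (hd : ∀ n : ℤ, d ≠ n * n) {a b c : ℤ}
    (h : a * c = b ^ 2 - d) : ∃ x y : ℤ, a * x ^ 2 + 2 * b * x * y + c * y ^ 2 ≠ 0 ∧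
      3 * (a * x ^ 2 + 2 * b * x * y + c * y ^ 2) ^ 2 ≤ 4 * |d| := by
  induction hn : a.natAbs using Nat.strong_induction_on generalizing a b c with
  | _ n ih =>
    have ha : a ≠ 0 := by
      rintro rfl
      exact hd b (by linarith)
    rcases le_or_gt (3 * a ^ 2) (4 * |d|) with hsmall | hlarge
    · exact ⟨1, 0, by simpa using ha, by simpa using hsmall⟩
    obtain ⟨q, hq⟩ := exists_four_mul_sq_sub_mul_le ha b
    have hdisc : (c - 2 * b * q + a * q ^ 2) * a = (b - a * q) ^ 2 - d := by
      linear_combination h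
    have hlt : |c - 2 * b * q + a * q ^ 2| < |a| := by
      refine lt_of_mul_lt_mul_right ?_ (abs_nonneg a)
      rw [← abs_mul, hdisc, abs_mul_abs_self]
      calc |(b - a * q) ^ 2 - d| ≤ |(b - a * q) ^ 2| + |d| := abs_sub _ _
        _ = (b - a * q) ^ 2 + |d| := by rw [abs_of_nonneg (sq_nonneg _)]
        _ < a * a := by linarith
    obtain ⟨x, y, hne, hle⟩ := ih _ (hn ▸ Int.natAbs_lt_iff_sq_lt.2 (sq_lt_sq.2 hlt)) hdisc rfl
    have hvalue : a * (y - q * x) ^ 2 + 2 * b * (y - q * x) * x + c * x ^ 2 =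
        (c - 2 * b * q + a * q ^ 2) * x ^ 2 + 2 * (b - a * q) * x * y + a * y ^ 2 := by ring
    exact ⟨y - q * x, x, hvalue ▸ hne, hvalue ▸ hle⟩

theorem exists_mem_span_norm_eq_mul (hd : ∀ n : ℤ, d ≠ n * n) {A : ℤ} {α : ℤ√d}
    (hco : IsCoprime A α.im) (hA : A ∣ α.norm) :
    ∃ β ∈ Ideal.span {(A : ℤ√d), α}, ∃ k : ℤ, k ≠ 0 ∧ 3 * k ^ 2 ≤ 4 * |d| ∧ β.norm = A * k := by
  obtain ⟨z, e, hze⟩ := hco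
  obtain ⟨n, hn⟩ := hA
  rw [Zsqrtd.norm_def] at hn
  -- `e` inverts `α.im` modulo `A`, so the ideal is the lattice `A ℤ + (e * α.re + √d) ℤ`.
  have hdisc : A * (e ^ 2 * n - d * z * (1 + e * α.im)) = (e * α.re) ^ 2 - d := by
    linear_combination (-e ^ 2) * hn - d * (1 + e * α.im) * hze
  obtain ⟨x, y, hne, hle⟩ := exists_quadratic_value_three_mul_sq_le hd hdisc
  refine ⟨⟨A * x + e * α.re * y, y⟩, Ideal.mem_span_pair.2 ⟨⟨x, z * y⟩, (y * e : ℤ), ?_⟩, _,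
    hne, hle, ?_⟩
  · ext
    · simp only [Zsqrtd.re_add, Zsqrtd.re_mul, Zsqrtd.re_intCast, Zsqrtd.im_intCast]
      ring
    · simp only [Zsqrtd.im_add, Zsqrtd.im_mul, Zsqrtd.re_intCast, Zsqrtd.im_intCast]
      linear_combination y * hze
  · rw [Zsqrtd.norm_def]
    linear_combination -y ^ 2 * hdisc

theorem dvd_mul_pow_of_norm_eq_mul_pow {m A : ℤ} {n : ℕ} {α β : ℤ√d}
    (hα : α.norm = m * A ^ n) (hβ : β ∈ Ideal.span {(A : ℤ√d), α}) : α ∣ m * β ^ n := by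
  obtain ⟨μ, ν, rfl⟩ := Ideal.mem_span_pair.1 hβ
  have hpow : α ∣ (μ * A + ν * α) ^ n - (μ * A) ^ n :=
    (Dvd.intro_left ν (by ring)).trans (sub_dvd_pow_sub_pow (μ * A + ν * α) (μ * A) n)
  have hnorm : α ∣ m * (μ * A) ^ n := by
    refine Dvd.intro (star α * μ ^ n) ?_
    rw [← mul_assoc, ← Zsqrtd.norm_eq_mul_conj, hα]
    push_cast
    ring
  simpa [mul_sub] using dvd_add (hpow.mul_left (m : ℤ√d)) hnorm

theorem zsqrtd_norm_pow (z : ℤ√d) (n : ℕ) : (z ^ n).norm = z.norm ^ n :=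
  map_pow Zsqrtd.normMonoidHom z n

-- `k` and `κ` measure how far the ideal `(A, α)` is from being principal.
theorem exists_mul_pow_eq_mul_of_norm_eq_mul_pow (hd : ∀ n : ℤ, d ≠ n * n) {m A : ℤ} {n : ℕ}
    (hn : n ≠ 0) {α : ℤ√d} (hα₀ : α ≠ 0) (hα : α.norm = m * A ^ n) (hco : IsCoprime A α.im) :
    ∃ (β κ : ℤ√d) (k : ℤ), k ≠ 0 ∧ 3 * k ^ 2 ≤ 4 * |d| ∧ β.norm = A * k ∧
      m * β ^ n = α * κ ∧ κ.norm = m * k ^ n := by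
  obtain ⟨β, hβ, k, hk, hkd, hβk⟩ :=
    exists_mem_span_norm_eq_mul hd hco (hα ▸ (dvd_pow_self A hn).mul_left m)
  obtain ⟨κ, hκ⟩ := dvd_mul_pow_of_norm_eq_mul_pow hα hβ
  refine ⟨β, κ, k, hk, hkd, hβk, hκ, mul_left_cancel₀ (mt (Zsqrtd.norm_eq_zero hd α).1 hα₀) ?_⟩
  rw [← Zsqrtd.norm_mul, ← hκ, Zsqrtd.norm_mul, Zsqrtd.norm_intCast, zsqrtd_norm_pow, hβk, hα]
  ring

end SmallNorm

/-! ### Fifth roots in `ℤ√5` and `ℤ√(-5)` -/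

section FifthRoots

theorem prime_int_five : Prime (5 : ℤ) := Int.prime_iff_natAbs_prime.2 (by norm_num)

theorem not_dvd_of_prime_of_isCoprime {p a b : ℤ} (hp : Prime p) (hab : IsCoprime a b)
    (hb : p ∣ b) : ¬ p ∣ a :=
  fun ha ↦ hp.not_isUnit (hab.isUnit_of_dvd' ha hb)

variable {d : ℤ}

theorem isCoprime_norm_im_iff (z : ℤ√d) : IsCoprime z.norm z.im ↔ IsCoprime z.re z.im := by
  rw [Zsqrtd.norm_def, sub_eq_add_neg, ← neg_mul, IsCoprime.add_mul_right_left_iff, ← sq,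
    IsCoprime.pow_left_iff two_pos]

theorem odd_norm_iff (hd : Odd d) (z : ℤ√d) : Odd z.norm ↔ Odd (z.re + z.im) := by
  rw [Zsqrtd.norm_def]
  simp only [Int.odd_sub, Int.odd_add, Int.odd_mul, Int.even_mul, Int.not_even_iff_odd.2 hd,
    false_or, and_self, or_self]

/-- The factor left after removing `5 * y` from the coefficient of `√(5σ)` in
`(x + y * √(5σ)) ^ 5`, for a sign `σ`. -/
def quinticCofactor (σ x y : ℤ) : ℤ := x ^ 4 + 10 * σ * x ^ 2 * y ^ 2 + 5 * y ^ 4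

theorem im_pow_five {σ : ℤ} (hd : d = 5 * σ) (hσ : σ ^ 2 = 1) (z : ℤ√d) :
    (z ^ 5).im = 5 * z.im * quinticCofactor σ z.re z.im := by
  subst hd
  simp only [pow_succ, pow_zero, one_mul, Zsqrtd.re_mul, Zsqrtd.im_mul, quinticCofactor]
  linear_combination 25 * z.im ^ 5 * hσ

theorem five_dvd_im_pow_five (hd : 5 ∣ d) (z : ℤ√d) : 5 ∣ (z ^ 5).im := by
  obtain ⟨e, rfl⟩ := hd
  refine Dvd.intro
    (z.re ^ 4 * z.im + 10 * e * z.re ^ 2 * z.im ^ 3 + 5 * e ^ 2 * z.im ^ 5) ?_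
  simp only [pow_succ, pow_zero, one_mul, Zsqrtd.re_mul, Zsqrtd.im_mul]
  ring

theorem five_dvd_im_of_mul_pow_eq_mul (hd : 5 ∣ d) {m : ℤ} {α β κ : ℤ√d}
    (h : m * β ^ 5 = α * κ) (hre : ¬ 5 ∣ α.re) (him : 5 ∣ α.im) : 5 ∣ κ.im := by
  have heq : α.re * κ.im = m * (β ^ 5).im - α.im * κ.re := by
    have := congrArg Zsqrtd.im h
    rw [Zsqrtd.im_smul, Zsqrtd.im_mul] at this
    linear_combination -this
  have hdvd : 5 ∣ α.re * κ.im := heq ▸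
    dvd_sub ((five_dvd_im_pow_five hd β).mul_left m) (him.mul_right κ.re)
  exact (prime_int_five.dvd_or_dvd hdvd).resolve_left hre

theorem not_dvd_re_of_not_dvd_norm {p : ℤ} (hd : p ∣ d) {z : ℤ√d} (hz : ¬ p ∣ z.norm) :
    ¬ p ∣ z.re := fun hre ↦ hz <| by
  rw [Zsqrtd.norm_def, mul_assoc]
  exact dvd_sub (hre.mul_right _) (hd.mul_right _)

theorem five_ne_mul_self (n : ℤ) : (5 : ℤ) ≠ n * n := by
  intro h
  have hupper : n ≤ 2 := by nlinarith
  have hlower : -2 ≤ n := by nlinarith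
  interval_cases n <;> omega

/-- The solution `(9, 4)` of `x² - 5y² = 1`, whose powers give, up to sign, all elements of norm one
of `ℤ√5`. -/
def pellSolutionFive : Pell.Solution₁ 5 := Pell.Solution₁.mk 9 4 (by norm_num)

theorem isFundamental_pellSolutionFive : Pell.IsFundamental pellSolutionFive := by
  refine ⟨by simp [pellSolutionFive], by simp [pellSolutionFive], fun {a} ha ↦ ?_⟩
  rw [pellSolutionFive, Pell.Solution₁.x_mk]
  by_contra! hlt
  have hpell := a.prop
  have hupper : a.y ≤ 3 := by nlinarith
  have hlower : -3 ≤ a.y := by nlinarith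
  generalize a.x = x at *
  generalize a.y = y at *
  interval_cases x <;> interval_cases y <;> omega

theorem exists_eq_pow_five_mul_of_norm_eq_one {κ : ℤ√5} (h : κ.norm = 1) :
    ∃ (η : ℤ√5) (r : ℕ), r < 5 ∧ κ = η ^ 5 * ⟨9, 4⟩ ^ r := by
  obtain ⟨n, hn⟩ := isFundamental_pellSolutionFive.eq_zpow_or_neg_zpow
    ⟨κ, Zsqrtd.norm_eq_one_iff_mem_unitary.1 h⟩
  obtain ⟨r, hr⟩ := Int.eq_ofNat_of_zero_le (Int.emod_nonneg n (by norm_num : (5 : ℤ) ≠ 0))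
  have hsplit : pellSolutionFive ^ n =
      (pellSolutionFive ^ (n / 5)) ^ 5 * pellSolutionFive ^ r := by
    rw [← zpow_natCast _ r, ← zpow_natCast _ 5, ← zpow_mul, ← zpow_add, ← hr]
    congr 1
    have := Int.emod_add_mul_ediv n 5
    push_cast
    linarith
  have hr5 : r < 5 := by omega
  rcases hn with hn | hn
  · exact ⟨(pellSolutionFive ^ (n / 5)).1, r, hr5, congrArg Subtype.val (hn.trans hsplit)⟩
  · refine ⟨(-pellSolutionFive ^ (n / 5)).1, r, hr5,
      congrArg Subtype.val (hn.trans (b := _) (c := (-_) ^ 5 * pellSolutionFive ^ r) ?_)⟩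
    rw [hsplit, Odd.neg_pow (by decide), neg_mul]

-- Modulo 5, fifth powers have no `√5`-coordinate, so the leftover exponent `r` is read off from
-- `κ.im`.
theorem exists_eq_pow_five_of_norm_eq_one {κ : ℤ√5} (h : κ.norm = 1) (h5 : 5 ∣ κ.im) :
    ∃ η : ℤ√5, κ = η ^ 5 := by
  obtain ⟨η, r, hr, hκ⟩ := exists_eq_pow_five_mul_of_norm_eq_one h
  have hre : ¬ 5 ∣ κ.re := not_dvd_re_of_not_dvd_norm dvd_rfl (by rw [h]; norm_num)
  have hη : ((1 : ℤ) : ℤ√5) * η ^ 5 = κ * ⟨9, -4⟩ ^ r := by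
    have hinv : (⟨9, 4⟩ : ℤ√5) * ⟨9, -4⟩ = 1 := by decide
    rw [hκ, mul_assoc, ← mul_pow, hinv, one_pow, mul_one, Int.cast_one, one_mul]
  have him : (5 : ℤ) ∣ ((⟨9, -4⟩ : ℤ√5) ^ r).im :=
    five_dvd_im_of_mul_pow_eq_mul dvd_rfl hη hre h5
  have hr0 : r = 0 := by
    interval_cases r
    · rfl
    all_goals exact absurd him (by decide)
  exact ⟨η, by rw [hκ, hr0, pow_zero, mul_one]⟩

theorem exists_eq_pow_five_of_isUnit_norm {κ : ℤ√5} (h : IsUnit κ.norm) (h5 : 5 ∣ κ.im) :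
    ∃ η : ℤ√5, κ = η ^ 5 := by
  rcases Int.isUnit_iff.1 h with h | h
  · exact exists_eq_pow_five_of_norm_eq_one h h5
  -- `2 + √5` has norm `-1`.
  have hnorm : (κ * (⟨2, 1⟩ : ℤ√5) ^ 5).norm = 1 := by
    rw [Zsqrtd.norm_mul, h]
    decide
  have him : 5 ∣ (κ * (⟨2, 1⟩ : ℤ√5) ^ 5).im := by
    rw [Zsqrtd.im_mul]
    exact dvd_add ((five_dvd_im_pow_five dvd_rfl _).mul_left _) (h5.mul_right _)
  obtain ⟨η, hη⟩ := exists_eq_pow_five_of_norm_eq_one hnorm him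
  refine ⟨η * ⟨-2, 1⟩, ?_⟩
  have hinv : (⟨2, 1⟩ : ℤ√5) * ⟨-2, 1⟩ = 1 := by decide
  rw [mul_pow, ← hη, mul_assoc, ← mul_pow, hinv, one_pow, mul_one]

theorem isUnit_of_norm_eq_odd_mul {β : ℤ√5} {t k : ℤ} (ht : Odd t) (hk₀ : k ≠ 0)
    (hk : 3 * k ^ 2 ≤ 4 * 5) (h : β.norm = t * k) : IsUnit k := by
  have hk_upper : k ≤ 2 := by nlinarith
  have hk_lower : -2 ≤ k := by nlinarith
  have hmod : ∀ x y : ZMod 4, x * x - 5 * y * y ≠ 2 := by decide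
  have hnorm : ((t * k : ℤ) : ZMod 4) ≠ 2 := by
    rw [← h, Zsqrtd.norm_def]
    push_cast
    exact hmod _ _
  obtain ⟨s, rfl⟩ := ht
  have hmul : ∀ s : ZMod 4, (2 * s + 1) * 2 = 2 ∧ (2 * s + 1) * -2 = 2 := by decide
  push_cast at hnorm
  interval_cases k
  · exact absurd (by simpa using (hmul s).2) hnorm
  · decide
  · contradiction
  · decide
  · exact absurd (by simpa using (hmul s).1) hnorm

theorem exists_eq_pow_five_of_norm_eq_pow_five {α : ℤ√5} {t : ℤ} (hα : α.norm = t ^ 5)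
    (ht : Odd t) (hco : IsCoprime α.re α.im) (h5 : 5 ∣ α.im) : ∃ ζ : ℤ√5, α = ζ ^ 5 := by
  have hnorm : IsCoprime (t ^ 5) α.im := hα ▸ (isCoprime_norm_im_iff α).2 hco
  have hα₀ : α ≠ 0 := by
    rintro rfl
    exact pow_ne_zero 5 (show t ≠ 0 by rintro rfl; simp at ht) (by rw [← hα, Zsqrtd.norm_zero])
  obtain ⟨β, κ, k, hk₀, hk, hβ, hβκ, hκ⟩ :=
    exists_mul_pow_eq_mul_of_norm_eq_mul_pow five_ne_mul_self (m := 1) (n := 5) (by norm_num) hα₀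
      (by rw [hα, one_mul]) ((IsCoprime.pow_left_iff (by norm_num)).1 hnorm)
  have hκ_unit : IsUnit κ.norm := by
    rw [hκ, one_mul]
    exact (isUnit_of_norm_eq_odd_mul ht hk₀ hk hβ).pow 5
  have hre : ¬ 5 ∣ α.re := not_dvd_of_prime_of_isCoprime prime_int_five hco h5
  obtain ⟨η, rfl⟩ := exists_eq_pow_five_of_isUnit_norm hκ_unit
    (five_dvd_im_of_mul_pow_eq_mul dvd_rfl hβκ hre h5)
  obtain ⟨θ, hθ⟩ : ∃ θ, η * θ = 1 :=
    ((isUnit_pow_iff (by norm_num)).1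
      ((Zsqrtd.isUnit_iff_norm_isUnit _).2 hκ_unit)).exists_right_inv
  refine ⟨β * θ, ?_⟩
  rw [mul_pow, ← one_mul (β ^ 5), ← Int.cast_one, hβκ, mul_assoc, ← mul_pow, hθ, one_pow, mul_one]

theorem im_eq_zero_of_norm_eq_sq {κ : ℤ√(-5)} {c : ℤ} (hc : c ∈ ({1, 8, 9, 72} : Finset ℤ))
    (h : κ.norm = c ^ 2) (h5 : 5 ∣ κ.im) : κ.im = 0 := by
  obtain ⟨f, hf⟩ := h5
  have hsum : c ^ 2 - 125 * f ^ 2 = κ.re * κ.re := by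
    rw [← h, Zsqrtd.norm_def, hf]
    ring
  have hsquare : IsSquare (c ^ 2 - 125 * f ^ 2) := ⟨κ.re, hsum⟩
  have hc72 : c ^ 2 ≤ 72 ^ 2 := by fin_cases hc <;> norm_num
  have hupper : f ≤ 6 := by nlinarith [mul_self_nonneg κ.re]
  have hlower : -6 ≤ f := by nlinarith [mul_self_nonneg κ.re]
  suffices f = 0 by rw [hf, this, mul_zero]
  clear hf hsum hc72
  fin_cases hc <;> interval_cases f <;> first | rfl | norm_num at hsquare

theorem eq_of_norm_eq_mul_sq_mul_pow_five {κ : ℤ√(-5)} {k j g : ℤ} (hk : k = 1 ∨ k = 2)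
    (hj : j = 1 ∨ j = 2) (hg : g = 1 ∨ g = 9) (hκ : κ.norm = k * g ^ 2 * j ^ 5) : j = k := by
  have hsquare : ∀ x : ZMod 5, x ^ 2 ≠ 2 := by decide
  have hmod : (κ.re : ZMod 5) ^ 2 = k * g ^ 2 * j ^ 5 := by
    have h5 : (5 : ZMod 5) = 0 := rfl
    have hcast := congrArg (Int.cast : ℤ → ZMod 5) hκ
    rw [Zsqrtd.norm_def] at hcast
    push_cast at hcast
    linear_combination hcast - (κ.im : ZMod 5) ^ 2 * h5
  rcases hk with rfl | rfl <;> rcases hj with rfl | rfl <;>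
    first | rfl | exact absurd (hmod.trans (by rcases hg with rfl | rfl <;> decide)) (hsquare _)

theorem zsqrtd_eq_or_eq_neg_intCast_of_norm_eq_sq {κ : ℤ√d} {c : ℤ} (him : κ.im = 0)
    (h : κ.norm = c ^ 2) : κ = c ∨ κ = -c := by
  rw [Zsqrtd.norm_def, him, mul_zero, sub_zero, ← sq, sq_eq_sq_iff_eq_or_eq_neg] at h
  exact h.imp (fun hre ↦ Zsqrtd.ext hre him) fun hre ↦ Zsqrtd.ext hre (by simpa using him)

theorem eq_one_or_eq_two_of_norm_eq_mul {β : ℤ√(-5)} {A j : ℤ} (hA : 0 < A) (hj₀ : j ≠ 0)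
    (hj : 3 * j ^ 2 ≤ 20) (h : β.norm = A * j) : j = 1 ∨ j = 2 := by
  have hnonneg : 0 ≤ j :=
    nonneg_of_mul_nonneg_right (h ▸ Zsqrtd.norm_nonneg (by norm_num) β) hA
  have hle : j ≤ 2 := by nlinarith
  omega

theorem mul_pow_five_eq_or_eq_neg_of_norm_eq {k g : ℤ} {α β κ : ℤ√(-5)} (hk : k = 1 ∨ k = 2)
    (hg : g = 1 ∨ g = 9) (h : (k * g ^ 2 : ℤ) * β ^ 5 = α * κ)
    (hκ : κ.norm = k * g ^ 2 * k ^ 5) (h5 : 5 ∣ κ.im) :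
    (g : ℤ√(-5)) * β ^ 5 = (k ^ 2 : ℤ) * α ∨ (g : ℤ√(-5)) * β ^ 5 = -((k ^ 2 : ℤ) * α) := by
  have hκ_sq : κ.norm = (k ^ 3 * g) ^ 2 := by
    rw [hκ]
    ring
  have hkg : k ^ 3 * g ∈ ({1, 8, 9, 72} : Finset ℤ) ∧ k * g ≠ 0 := by
    rcases hk with rfl | rfl <;> rcases hg with rfl | rfl <;> decide
  refine (zsqrtd_eq_or_eq_neg_intCast_of_norm_eq_sq
    (im_eq_zero_of_norm_eq_sq hkg.1 hκ_sq h5) hκ_sq).imp ?_ ?_ <;>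
  · rintro rfl
    refine Zsqrtd.eq_of_smul_eq_smul_left hkg.2 ?_
    push_cast at h ⊢
    linear_combination h

theorem exists_mul_pow_five_eq_of_norm_eq {k g A : ℤ} {α : ℤ√(-5)} (hk : k = 1 ∨ k = 2)
    (hg : g = 1 ∨ g = 9) (hα : α.norm = k * g ^ 2 * A ^ 5) (h5 : 5 ∣ α.im)
    (hco : IsCoprime A α.im) :
    ∃ β : ℤ√(-5), (g : ℤ√(-5)) * β ^ 5 = (k ^ 2 : ℤ) * α ∧ β.norm = A * k := by
  have hA5 : ¬ 5 ∣ A := not_dvd_of_prime_of_isCoprime prime_int_five hco h5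
  have hm : ¬ 5 ∣ k * g ^ 2 ∧ 0 < k * g ^ 2 := by
    rcases hk with rfl | rfl <;> rcases hg with rfl | rfl <;> decide
  have hre : ¬ 5 ∣ α.re := not_dvd_re_of_not_dvd_norm (by norm_num) <| by
    rw [hα, prime_int_five.dvd_mul, prime_int_five.dvd_pow_iff_dvd (by norm_num)]
    exact not_or_intro hm.1 hA5
  have hα₀ : α ≠ 0 := by
    rintro rfl
    exact hre (dvd_zero 5)
  have hA : 0 < A := by
    refine lt_of_le_of_ne ?_ (fun h ↦ hA5 (h ▸ dvd_zero 5))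
    have hnorm := Zsqrtd.norm_nonneg (by norm_num) α
    rw [hα] at hnorm
    exact (Odd.pow_nonneg_iff (by decide)).1 (nonneg_of_mul_nonneg_right hnorm hm.2)
  obtain ⟨β, κ, j, hj₀, hj, hβ, hβκ, hκ⟩ := exists_mul_pow_eq_mul_of_norm_eq_mul_pow
    (fun n hn ↦ by nlinarith [mul_self_nonneg n]) (n := 5) (by norm_num) hα₀ hα hco
  obtain rfl := eq_of_norm_eq_mul_sq_mul_pow_five hk
    (eq_one_or_eq_two_of_norm_eq_mul hA hj₀ hj hβ) hg hκ
  rcases mul_pow_five_eq_or_eq_neg_of_norm_eq hk hg hβκ hκ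
    (five_dvd_im_of_mul_pow_eq_mul (by norm_num) hβκ hre h5) with hroot | hroot
  · exact ⟨β, hroot, hβ⟩
  · refine ⟨-β, ?_, by rw [Zsqrtd.norm_neg, hβ]⟩
    rw [Odd.neg_pow (by decide), mul_neg, hroot, neg_neg]

end FifthRoots

/-! ### Infinite descent on the quintic cofactor -/

section Descent

/-- `x` is an `n`-th power up to a factor all of whose prime divisors divide `m`. The factor `N` is
cleared by multiplication, and `N ∣ m ^ j` bounds its primes. -/
def IsPowUpTo (m : ℤ) (n : ℕ) (x : ℤ) : Prop :=
  ∃ (j : ℕ) (N s : ℤ), N ∣ m ^ j ∧ x * N = s ^ n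

namespace IsPowUpTo

variable {m x y c : ℤ} {n j : ℕ}

theorem pow (m : ℤ) (n : ℕ) (s : ℤ) : IsPowUpTo m n (s ^ n) := ⟨0, 1, s, by simp, mul_one _⟩

theorem mul (hx : IsPowUpTo m n x) (hy : IsPowUpTo m n y) : IsPowUpTo m n (x * y) := by
  obtain ⟨i, M, s, hM, hs⟩ := hx
  obtain ⟨j, N, t, hN, ht⟩ := hy
  exact ⟨i + j, M * N, s * t, pow_add m i j ▸ mul_dvd_mul hM hN,
    by rw [mul_mul_mul_comm, hs, ht, mul_pow]⟩

theorem of_dvd_pow (hn : n ≠ 0) (hc : c ∣ m ^ j) : IsPowUpTo m n c :=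
  ⟨j * (n - 1), c ^ (n - 1), c, pow_mul m j _ ▸ pow_dvd_pow_of_dvd hc _, mul_pow_sub_one hn c⟩

theorem of_mul_left (hc : c ∣ m ^ j) (h : IsPowUpTo m n (c * x)) : IsPowUpTo m n x := by
  obtain ⟨i, N, s, hN, hs⟩ := h
  exact ⟨j + i, c * N, s, pow_add m j i ▸ mul_dvd_mul hc hN, by rw [← hs]; ring⟩

theorem eq_pow_of_isCoprime (hn : Odd n) (hco : IsCoprime x (m * y))
    (h : IsPowUpTo m n (x * y)) : (∃ t, x = t ^ n) ∧ IsPowUpTo m n y := by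
  obtain ⟨j, N, s, hN, hs⟩ := h
  have hxN : IsCoprime x N := hco.of_mul_right_left.pow_right.of_isCoprime_of_dvd_right hN
  obtain ⟨hx, t, ht⟩ := Int.eq_pow_of_mul_eq_pow_odd (hco.of_mul_right_right.mul_right hxN) hn
    (by rw [← hs, mul_assoc])
  exact ⟨hx, j, N, t, hN, ht⟩

end IsPowUpTo

variable {σ x y : ℤ}

theorem odd_quinticCofactor (h : Odd (x + y)) : Odd (quinticCofactor σ x y) := by
  have hsum : quinticCofactor σ x y =
      (x + y) ^ 4 + 2 * (y * (2 * y ^ 3 - 2 * x ^ 3 - 3 * x ^ 2 * y - 2 * x * y ^ 2 +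
        5 * σ * x ^ 2 * y)) := by
    rw [quinticCofactor]
    ring
  rw [hsum]
  exact h.pow.add_even (even_two_mul _)

theorem isCoprime_quinticCofactor_three (hσ : σ ^ 2 = 1) (h : IsCoprime x y) :
    IsCoprime (quinticCofactor σ x y) 3 := by
  refine ((Prime.coprime_iff_not_dvd Int.prime_three).2 fun hdvd ↦ ?_).symm
  have hmod : ∀ s a b : ZMod 3, s ^ 2 = 1 → a ^ 4 + 10 * s * a ^ 2 * b ^ 2 + 5 * b ^ 4 = 0 →
      a = 0 ∧ b = 0 := by decide
  replace hdvd := (ZMod.intCast_zmod_eq_zero_iff_dvd _ 3).2 hdvd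
  rw [quinticCofactor] at hdvd
  obtain ⟨hx, hy⟩ := hmod σ x y (by exact_mod_cast congrArg (Int.cast : ℤ → ZMod 3) hσ)
    (by exact_mod_cast hdvd)
  exact not_dvd_of_prime_of_isCoprime Int.prime_three h
    ((ZMod.intCast_zmod_eq_zero_iff_dvd y 3).1 hy) ((ZMod.intCast_zmod_eq_zero_iff_dvd x 3).1 hx)

theorem isCoprime_quinticCofactor_fifteen_mul (hσ : σ ^ 2 = 1) (h : IsCoprime x (5 * y)) :
    IsCoprime (quinticCofactor σ x y) (15 * y) := by
  have hfive : IsCoprime (quinticCofactor σ x y) (5 * y) := by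
    have hsum : quinticCofactor σ x y = x ^ 4 + (2 * σ * x ^ 2 * y + y ^ 3) * (5 * y) := by
      rw [quinticCofactor]
      ring
    rw [hsum, IsCoprime.add_mul_right_left_iff]
    exact h.pow_left
  have := (isCoprime_quinticCofactor_three hσ h.of_mul_right_right).mul_right hfive
  rwa [← mul_assoc] at this

theorem isCoprime_quinticCofactor_thirty_mul (hσ : σ ^ 2 = 1) (h : IsCoprime x (5 * y))
    (hodd : Odd (x + y)) : IsCoprime (quinticCofactor σ x y) (30 * y) := by
  have := (Int.isCoprime_two_right.2 (odd_quinticCofactor hodd)).mul_right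
    (isCoprime_quinticCofactor_fifteen_mul hσ h)
  rwa [← mul_assoc] at this

theorem quinticCofactor_eq_norm (hσ : σ ^ 2 = 1) :
    quinticCofactor σ x y = (⟨x ^ 2 + 5 * σ * y ^ 2, 2 * y ^ 2⟩ : ℤ√5).norm := by
  rw [Zsqrtd.norm_def, quinticCofactor]
  linear_combination -25 * y ^ 4 * hσ

theorem five_mul_pow_four_le_quinticCofactor_one (x y : ℤ) :
    5 * y ^ 4 ≤ quinticCofactor 1 x y := by
  have : 0 ≤ x ^ 4 + 10 * x ^ 2 * y ^ 2 := by positivity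
  rw [quinticCofactor]
  linarith

theorem exists_im_eq_of_norm_eq_pow_five {α : ℤ√5} {t : ℤ} (hα : α.norm = t ^ 5)
    (hco : IsCoprime α.re α.im) (hodd : Odd (α.re + α.im)) (h5 : 5 ∣ α.im) :
    ∃ x y : ℤ, IsCoprime x (5 * y) ∧ Odd (x + y) ∧ α.im = 5 * y * quinticCofactor 1 x y := by
  have hnorm_odd : Odd α.norm := (odd_norm_iff (by decide) α).2 hodd
  have hnorm_five : ¬ 5 ∣ α.norm :=
    not_dvd_of_prime_of_isCoprime prime_int_five ((isCoprime_norm_im_iff α).2 hco) h5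
  obtain ⟨ζ, rfl⟩ := exists_eq_pow_five_of_norm_eq_pow_five hα
    ((Int.odd_pow' (by norm_num)).1 (hα ▸ hnorm_odd)) hco h5
  rw [zsqrtd_norm_pow] at hnorm_odd hnorm_five
  refine ⟨ζ.re, ζ.im, IsCoprime.mul_right ?_ ?_, ?_, im_pow_five (by norm_num) (one_pow 2) ζ⟩
  · refine ((Prime.coprime_iff_not_dvd prime_int_five).2 ?_).symm
    exact not_dvd_re_of_not_dvd_norm dvd_rfl fun h ↦ hnorm_five (dvd_pow h (by norm_num))
  · exact Zsqrtd.isCoprime_of_dvd_isCoprime hco (dvd_pow_self ζ (by norm_num))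
  · exact (odd_norm_iff (by decide) ζ).1 ((Int.odd_pow' (by norm_num)).1 hnorm_odd)

/-- The quantities on which the infinite descent runs: coprime `x`, `y` of opposite parity with
`5 ∣ y ≠ 0`, for which `quinticCofactor σ x y * y` is a fifth power away from `2`, `3` and `5`. -/
structure DescentPair (σ x y : ℤ) : Prop where
  isCoprime : IsCoprime x y
  odd_add : Odd (x + y)
  five_dvd : 5 ∣ y
  ne_zero : y ≠ 0
  isPowUpTo : IsPowUpTo 30 5 (quinticCofactor σ x y * y)

theorem isCoprime_five_mul_of_five_dvd (h : IsCoprime x y) (h5 : 5 ∣ y) : IsCoprime x (5 * y) :=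
  (h.of_isCoprime_of_dvd_right h5).mul_right h

theorem natAbs_lt_of_two_mul_sq_eq {z : ℤ} (hz : z ≠ 0)
    (h : 2 * z ^ 2 = 5 * y * quinticCofactor 1 x y) : y.natAbs < z.natAbs := by
  have hQ := five_mul_pow_four_le_quinticCofactor_one x y
  have hy : 0 < y := by
    have : 0 < z ^ 2 := by positivity
    exact pos_of_mul_pos_left (by linarith : 0 < y * quinticCofactor 1 x y)
      ((by positivity : 0 ≤ 5 * y ^ 4).trans hQ)
  have hpow : y ^ 2 ≤ y ^ 5 := pow_le_pow_right₀ hy (by norm_num)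
  have hmul : y * (5 * y ^ 4) ≤ y * quinticCofactor 1 x y := by gcongr
  rw [Int.natAbs_lt_iff_sq_lt]
  nlinarith [pow_pos hy 2]

theorem exists_two_mul_sq_eq_of_quinticCofactor_eq_pow_five {t : ℤ} (hσ : σ ^ 2 = 1)
    (hco : IsCoprime x y) (hodd : Odd (x + y)) (h5 : 5 ∣ y) (ht : quinticCofactor σ x y = t ^ 5) :
    ∃ x₁ y₁ : ℤ, IsCoprime x₁ (5 * y₁) ∧ Odd (x₁ + y₁) ∧
      2 * y ^ 2 = 5 * y₁ * quinticCofactor 1 x₁ y₁ := by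
  have hQ := isCoprime_quinticCofactor_thirty_mul hσ (isCoprime_five_mul_of_five_dvd hco h5) hodd
  have hQ_odd : Odd (quinticCofactor σ x y) := odd_quinticCofactor hodd
  have hα := quinticCofactor_eq_norm (x := x) (y := y) hσ
  rw [hα] at hQ hQ_odd
  refine exists_im_eq_of_norm_eq_pow_five (hα ▸ ht) ((isCoprime_norm_im_iff _).1 ?_)
    ((odd_norm_iff (by decide) _).1 hQ_odd) ((dvd_pow h5 two_ne_zero).mul_left 2)
  exact (Int.isCoprime_two_right.2 hQ_odd).mul_right hQ.of_mul_right_right.pow_right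

theorem DescentPair.exists_smaller (hσ : σ ^ 2 = 1) (h : DescentPair σ x y) :
    ∃ x₁ y₁ : ℤ, DescentPair 1 x₁ y₁ ∧ y₁.natAbs < y.natAbs := by
  obtain ⟨⟨t, ht⟩, hy⟩ := h.isPowUpTo.eq_pow_of_isCoprime (by decide)
    (isCoprime_quinticCofactor_thirty_mul hσ
      (isCoprime_five_mul_of_five_dvd h.isCoprime h.five_dvd) h.odd_add)
  obtain ⟨x₁, y₁, hco₁, hodd₁, heq⟩ := exists_two_mul_sq_eq_of_quinticCofactor_eq_pow_five hσ
    h.isCoprime h.odd_add h.five_dvd ht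
  refine ⟨x₁, y₁, ⟨hco₁.of_mul_right_right, hodd₁, ?_, ?_, ?_⟩,
    natAbs_lt_of_two_mul_sq_eq h.ne_zero heq⟩
  · have hQ₁ : IsCoprime 5 (quinticCofactor 1 x₁ y₁) :=
      ((isCoprime_quinticCofactor_fifteen_mul (one_pow 2) hco₁).of_isCoprime_of_dvd_right
        (Dvd.intro (3 * y₁) (by ring))).symm
    refine hQ₁.dvd_of_dvd_mul_right ?_
    obtain ⟨z, hz⟩ := h.five_dvd
    exact ⟨2 * z ^ 2, by rw [hz] at heq; linarith⟩
  · rintro rfl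
    simp [h.ne_zero] at heq
  · have hpow : IsPowUpTo 30 5 (2 * (y * y)) :=
      (IsPowUpTo.of_dvd_pow (j := 1) (by norm_num) (by norm_num)).mul (hy.mul hy)
    have hprod : 2 * (y * y) = 5 * (quinticCofactor 1 x₁ y₁ * y₁) := by linarith
    exact IsPowUpTo.of_mul_left (j := 1) (by norm_num) (hprod ▸ hpow)

theorem not_descentPair (hσ : σ ^ 2 = 1) : ¬ DescentPair σ x y := by
  intro h
  induction hn : y.natAbs using Nat.strong_induction_on generalizing σ x y with
  | _ n ih =>
    obtain ⟨x₁, y₁, h₁, hlt⟩ := h.exists_smaller hσ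
    exact ih _ (hn ▸ hlt) (one_pow 2) h₁ rfl

theorem not_isSquare_quinticCofactor_one (hx : Even x) (hy : Odd y) :
    ¬ IsSquare (quinticCofactor 1 x y) := by
  rintro ⟨w, hw⟩
  obtain ⟨a, rfl⟩ := hx
  obtain ⟨b, rfl⟩ := hy
  have hmod : ∀ a b w : ZMod 8,
      (a + a) ^ 4 + 10 * (a + a) ^ 2 * (2 * b + 1) ^ 2 + 5 * (2 * b + 1) ^ 4 ≠ w * w := by
    decide
  refine hmod a b w ?_
  rw [quinticCofactor] at hw
  exact_mod_cast congrArg (Int.cast : ℤ → ZMod 8) (by simpa using hw)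

theorem exists_quinticCofactor_neg_one_eq_four_mul_norm (hx : Odd x) (hy : Odd y) :
    ∃ z : ℤ, 2 * (2 * z) = x ^ 2 + -5 * y * y ∧
      quinticCofactor (-1) x y = 4 * (⟨2 * z, y ^ 2⟩ : ℤ√5).norm := by
  obtain ⟨a, rfl⟩ := hx
  obtain ⟨b, rfl⟩ := hy
  refine ⟨a ^ 2 + a - 5 * b ^ 2 - 5 * b - 1, by ring, ?_⟩
  rw [quinticCofactor, Zsqrtd.norm_def]
  ring

theorem quinticCofactor_neg_one_ne_four_mul_pow_five (hx : Odd x) (hy : Odd y)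
    (hco : IsCoprime x y) (h5 : 5 ∣ y) (t : ℤ) : quinticCofactor (-1) x y ≠ 4 * t ^ 5 := by
  intro ht
  obtain ⟨z, hz, hnorm⟩ := exists_quinticCofactor_neg_one_eq_four_mul_norm hx hy
  have hα : (⟨2 * z, y ^ 2⟩ : ℤ√5).norm = t ^ 5 :=
    mul_left_cancel₀ four_ne_zero (hnorm.symm.trans ht)
  have hαco : IsCoprime (2 * z) (y ^ 2) := by
    refine IsCoprime.pow_right (IsCoprime.of_mul_left_right (x := 2) ?_)
    rw [hz, IsCoprime.add_mul_right_left_iff]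
    exact hco.pow_left
  obtain ⟨x₁, y₁, hco₁, hodd₁, him⟩ := exists_im_eq_of_norm_eq_pow_five hα hαco
    ((even_two_mul z).add_odd hy.pow) (dvd_pow h5 two_ne_zero)
  have hy₁ : Odd y₁ := by
    have : Odd (5 * y₁ * quinticCofactor 1 x₁ y₁) := him ▸ hy.pow
    exact Int.Odd.of_mul_right (Int.Odd.of_mul_left this)
  have hx₁ : Even x₁ := (Int.odd_add'.1 hodd₁).1 hy₁
  have hQ : IsCoprime (quinticCofactor 1 x₁ y₁) (5 * y₁) :=
    (isCoprime_quinticCofactor_fifteen_mul (one_pow 2) hco₁).of_isCoprime_of_dvd_right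
      (Dvd.intro 3 (by ring))
  have hQ_nonneg : 0 ≤ quinticCofactor 1 x₁ y₁ :=
    (by positivity : 0 ≤ 5 * y₁ ^ 4).trans (five_mul_pow_four_le_quinticCofactor_one x₁ y₁)
  obtain ⟨w, hw | hw⟩ := Int.sq_of_isCoprime hQ ((mul_comm _ _).trans him.symm)
  · exact not_isSquare_quinticCofactor_one hx₁ hy₁ ⟨w, hw.trans (sq w)⟩
  · have hw₀ : quinticCofactor 1 x₁ y₁ = 0 := by linarith [sq_nonneg w]
    exact not_isSquare_quinticCofactor_one hx₁ hy₁ (hw₀ ▸ IsSquare.zero)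

theorem odd_and_odd_of_isCoprime_of_even_add (hco : IsCoprime x y) (h : Even (x + y)) :
    Odd x ∧ Odd y := by
  have hiff := Int.even_add.1 h
  have hy : Odd y := Int.not_even_iff_odd.1 fun hy ↦
    not_dvd_of_prime_of_isCoprime Int.prime_two hco hy.two_dvd (hiff.2 hy).two_dvd
  exact ⟨Int.not_even_iff_odd.1 (mt hiff.1 (Int.not_even_iff_odd.2 hy)), hy⟩

theorem mul_quinticCofactor_neg_one_ne {b : ℤ} (hco : IsCoprime x (5 * y)) (hb : b ≠ 0) :
    y * quinticCofactor (-1) x y ≠ 2700 * b ^ 5 := by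
  intro h
  have hσ : (-1 : ℤ) ^ 2 = 1 := by norm_num
  have hco15 := isCoprime_quinticCofactor_fifteen_mul hσ hco
  have h5 : 5 ∣ y := by
    have hQ5 : IsCoprime 5 (quinticCofactor (-1) x y) :=
      (hco15.of_isCoprime_of_dvd_right (Dvd.intro (3 * y) (by ring))).symm
    exact hQ5.dvd_of_dvd_mul_right ⟨540 * b ^ 5, by rw [h]; ring⟩
  have hy : y ≠ 0 := by
    rintro rfl
    simp [hb] at h
  rcases Int.even_or_odd (x + y) with heven | hodd
  · obtain ⟨hx_odd, hy_odd⟩ := odd_and_odd_of_isCoprime_of_even_add hco.of_mul_right_right heven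
    obtain ⟨z, -, hF⟩ := exists_quinticCofactor_neg_one_eq_four_mul_norm hx_odd hy_odd
    generalize (⟨2 * z, y ^ 2⟩ : ℤ√5).norm = F at hF
    have hpow : IsPowUpTo 15 5 (F * y) := by
      have hprod : F * y = 675 * b ^ 5 := by
        rw [hF] at h
        linarith
      rw [hprod]
      exact (IsPowUpTo.of_dvd_pow (j := 3) (by norm_num) (by norm_num)).mul (.pow 15 5 b)
    obtain ⟨⟨t, rfl⟩, -⟩ := hpow.eq_pow_of_isCoprime (by decide) (hF ▸ hco15).of_mul_left_right
    exact quinticCofactor_neg_one_ne_four_mul_pow_five hx_odd hy_odd hco.of_mul_right_right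
      h5 t hF
  · refine not_descentPair hσ ⟨hco.of_mul_right_right, hodd, h5, hy, ?_⟩
    rw [mul_comm, h]
    exact (IsPowUpTo.of_dvd_pow (j := 3) (by norm_num) (by norm_num)).mul (.pow 30 5 b)

end Descent

/-! ### The integral equation `c ^ 2 + 2 ^ 4 * 3 ^ 6 * 5 ^ 7 * b ^ 10 = a ^ 5` -/

section IntegralEquation

theorem isCoprime_re_im_of_norm_eq_mul {d A k : ℤ} {z : ℤ√d} (hk : Squarefree k)
    (hA : IsCoprime A z.im) (h : z.norm = A * k) : IsCoprime z.re z.im := by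
  rw [← gcd_isUnit_iff]
  have hgA : IsCoprime (gcd z.re z.im) A :=
    (hA.of_isCoprime_of_dvd_right (gcd_dvd_right z.re z.im)).symm
  refine hk _ ((hgA.mul_left hgA).dvd_of_dvd_mul_left ?_)
  rw [← h, Zsqrtd.norm_def, mul_assoc]
  exact dvd_sub (mul_dvd_mul (gcd_dvd_left _ _) (gcd_dvd_left _ _))
    ((mul_dvd_mul (gcd_dvd_right _ _) (gcd_dvd_right _ _)).mul_left d)

theorem pow_succ_dvd_of_pow_dvd_sq {p c : ℤ} {n : ℕ} (hp : Prime p) (h : p ^ (2 * n + 1) ∣ c ^ 2) :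
    p ^ (n + 1) ∣ c := by
  obtain ⟨w, rfl⟩ : p ^ n ∣ c := by
    rw [← Int.pow_dvd_pow_iff two_ne_zero, ← pow_mul, mul_comm n 2]
    exact (pow_dvd_pow p (Nat.le_succ _)).trans h
  have hw : p ∣ w ^ 2 := by
    rw [pow_succ, mul_pow, ← pow_mul, mul_comm n 2] at h
    exact (mul_dvd_mul_iff_left (pow_ne_zero _ hp.ne_zero)).1 h
  exact pow_succ p n ▸ mul_dvd_mul_left _ (hp.dvd_of_dvd_pow hw)

theorem exists_sq_add_eq_mul_pow_five_of_dvd {p a c n : ℤ} (hp : p ≠ 0)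
    (h : c ^ 2 + p ^ 4 * n = a ^ 5) (ha : p ∣ a) :
    ∃ A c', a = p * A ∧ c' ^ 2 + n = p * A ^ 5 := by
  obtain ⟨A, rfl⟩ := ha
  obtain ⟨c', rfl⟩ : p ^ 2 ∣ c := by
    rw [← Int.pow_dvd_pow_iff two_ne_zero]
    exact ⟨p * A ^ 5 - n, by linear_combination h⟩
  exact ⟨A, c', rfl, mul_left_cancel₀ (pow_ne_zero 4 hp) (by linear_combination h)⟩

theorem exists_sq_add_eq_pow_four_mul_of_prime_dvd {p a c m n : ℤ} (hp : Prime p) (hm : ¬ p ∣ m)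
    (h : c ^ 2 + p ^ 6 * n = m * a ^ 5) (ha : p ∣ a) :
    ∃ C c', a = p ^ 2 * C ∧ c' ^ 2 + n = p ^ 4 * (m * C ^ 5) := by
  obtain ⟨A, rfl⟩ := ha
  obtain ⟨c', rfl⟩ : p ^ 3 ∣ c := pow_succ_dvd_of_pow_dvd_sq hp
    ⟨m * A ^ 5 - p * n, by linear_combination h⟩
  have hA : p * (c' ^ 2 + n) = m * A ^ 5 :=
    mul_left_cancel₀ (pow_ne_zero 5 hp.ne_zero) (by linear_combination h)
  obtain ⟨C, rfl⟩ : p ∣ A :=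
    hp.dvd_of_dvd_pow ((hp.dvd_or_dvd (Dvd.intro _ hA)).resolve_left hm)
  exact ⟨C, c', by ring, mul_left_cancel₀ hp.ne_zero (by linear_combination hA)⟩

theorem not_dvd_of_sq_add_prime_pow_seven_mul_eq_pow_five {p a c n : ℤ} (hp : Prime p)
    (hn : p ∣ a → ¬ p ∣ n) (h : c ^ 2 + p ^ 7 * n = a ^ 5) : ¬ p ∣ a := by
  intro ha
  obtain ⟨C, c', -, hC⟩ := exists_sq_add_eq_pow_four_mul_of_prime_dvd (c := c) (m := 1)
    (n := p * n) hp (fun h ↦ hp.not_isUnit (isUnit_of_dvd_one h)) (by linear_combination h) ha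
  obtain ⟨c'', rfl⟩ : p ∣ c' := hp.dvd_of_dvd_pow (n := 2)
    ⟨p ^ 3 * C ^ 5 - n, by linear_combination hC⟩
  refine hn ha ⟨p ^ 2 * C ^ 5 - c'' ^ 2, mul_left_cancel₀ hp.ne_zero ?_⟩
  linear_combination hC

theorem odd_of_sq_add_eq_two_mul_pow {A c n : ℤ} (hn : n % 4 = 1) {j : ℕ} (hj : j ≠ 0)
    (h : c ^ 2 + n = 2 * A ^ j) : Odd A := by
  by_contra hA
  obtain ⟨B, hB⟩ := even_iff_two_dvd.1 ((Int.not_odd_iff_even.1 hA).pow_of_ne_zero hj)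
  have hc : c ^ 2 % 4 = 3 := by omega
  rcases Int.even_or_odd c with ⟨w, rfl⟩ | hc_odd
  · ring_nf at hc
    omega
  · exact absurd (Int.sq_mod_four_eq_one_of_odd hc_odd) (by omega)

-- For even `a` the factor `2 ^ 4` cancels and leaves a single `2` on the right; both cases have
-- `k ^ 2 * e = 4`.
theorem exists_odd_sq_add_eq_mul_pow_five {a c n : ℤ} (hn : 2 ∣ a → n % 4 = 1)
    (h : c ^ 2 + 2 ^ 4 * n = a ^ 5) : ∃ k e A c' : ℤ, (k = 1 ∧ e = 4 ∨ k = 2 ∧ e = 1) ∧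
      a = k * A ∧ Odd A ∧ c' ^ 2 + e ^ 2 * n = k * A ^ 5 := by
  by_cases ha : 2 ∣ a
  · obtain ⟨A, c', hA, h'⟩ := exists_sq_add_eq_mul_pow_five_of_dvd two_ne_zero h ha
    exact ⟨2, 1, A, c', .inr ⟨rfl, rfl⟩, hA,
      odd_of_sq_add_eq_two_mul_pow (hn ha) (by norm_num) h', by linear_combination h'⟩
  · exact ⟨1, 4, a, c, .inl ⟨rfl, rfl⟩, (one_mul a).symm,
      Int.not_even_iff_odd.1 (mt even_iff_two_dvd.1 ha), by linear_combination h⟩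

variable {k e A b c : ℤ}

theorem sq_add_ne_of_isCoprime_thirty_mul (hke : k = 1 ∧ e = 4 ∨ k = 2 ∧ e = 1) (hb : b ≠ 0)
    (hco : IsCoprime A (30 * b)) : c ^ 2 + e ^ 2 * (3 ^ 6 * 5 ^ 7 * b ^ 10) ≠ k * A ^ 5 := by
  intro h
  have hk : k = 1 ∨ k = 2 := hke.imp And.left And.left
  have hke4 : k ^ 2 * e = 4 := by rcases hke with ⟨rfl, rfl⟩ | ⟨rfl, rfl⟩ <;> norm_num
  have hco' : IsCoprime A (13500 * b ^ 5) := by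
    refine IsCoprime.mul_right ?_ hco.of_mul_right_right.pow_right
    exact (hco.of_mul_right_left.pow_right (n := 3)).of_isCoprime_of_dvd_right (by norm_num)
  obtain ⟨β, hβ, hnorm⟩ := exists_mul_pow_five_eq_of_norm_eq (g := 1) (A := A)
    (α := ⟨c, e * (3375 * b ^ 5)⟩) hk (.inl rfl)
    (by rw [Zsqrtd.norm_def]; linear_combination h) ⟨e * (675 * b ^ 5), by ring⟩
    (hco'.of_isCoprime_of_dvd_right ⟨k ^ 2, by linear_combination -3375 * b ^ 5 * hke4⟩)
  have him : 5 * β.im * quinticCofactor (-1) β.re β.im = 13500 * b ^ 5 := by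
    rw [← im_pow_five (by norm_num) (by norm_num), ← one_mul (β ^ 5), ← Int.cast_one, hβ,
      Zsqrtd.im_smul]
    linear_combination 3375 * b ^ 5 * hke4
  have hAim : IsCoprime A (5 * β.im) := hco'.of_isCoprime_of_dvd_right (Dvd.intro _ him)
  have hk_sqf : Squarefree k := by
    rcases hk with rfl | rfl
    exacts [squarefree_one, Int.prime_two.squarefree]
  have hre : ¬ 5 ∣ β.re := not_dvd_re_of_not_dvd_norm (by norm_num) <| by
    rw [hnorm, prime_int_five.dvd_mul]
    exact not_or_intro (not_dvd_of_prime_of_isCoprime prime_int_five hAim (dvd_mul_right 5 _))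
      (by omega)
  refine mul_quinticCofactor_neg_one_ne (x := β.re) (y := β.im) (IsCoprime.mul_right ?_ ?_)
    hb (mul_left_cancel₀ (by norm_num : (5 : ℤ) ≠ 0) (by linear_combination him))
  · exact ((Prime.coprime_iff_not_dvd prime_int_five).2 hre).symm
  · exact isCoprime_re_im_of_norm_eq_mul hk_sqf hAim.of_mul_right_right hnorm

theorem sq_add_ne_of_three_dvd (hke : k = 1 ∧ e = 4 ∨ k = 2 ∧ e = 1) (h3 : 3 ∣ A)
    (hco : IsCoprime A (10 * b)) : c ^ 2 + e ^ 2 * (3 ^ 6 * 5 ^ 7 * b ^ 10) ≠ k * A ^ 5 := by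
  intro h
  have hk : k = 1 ∨ k = 2 := hke.imp And.left And.left
  have hke4 : k ^ 2 * e = 4 := by rcases hke with ⟨rfl, rfl⟩ | ⟨rfl, rfl⟩ <;> norm_num
  have hb3 : ¬ 3 ∣ b := not_dvd_of_prime_of_isCoprime Int.prime_three hco.of_mul_right_right.symm h3
  obtain ⟨C, c', rfl, h'⟩ := exists_sq_add_eq_pow_four_mul_of_prime_dvd (c := c)
    (n := e ^ 2 * (5 ^ 7 * b ^ 10)) Int.prime_three (by omega : ¬ 3 ∣ k)
    (by linear_combination h) h3
  have hco' : IsCoprime C (500 * b ^ 5) := by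
    refine IsCoprime.mul_right ?_ hco.of_mul_left_right.of_mul_right_right.pow_right
    exact (hco.of_mul_left_right.of_mul_right_left.pow_right (n := 3)).of_isCoprime_of_dvd_right
      (by norm_num)
  obtain ⟨β, hβ, -⟩ := exists_mul_pow_five_eq_of_norm_eq (g := 9) (A := C)
    (α := ⟨c', e * (125 * b ^ 5)⟩) hk (.inr rfl)
    (by rw [Zsqrtd.norm_def]; linear_combination h') ⟨e * (25 * b ^ 5), by ring⟩
    (hco'.of_isCoprime_of_dvd_right ⟨k ^ 2, by linear_combination -125 * b ^ 5 * hke4⟩)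
  have him : 9 * (β ^ 5).im = 500 * b ^ 5 := by
    rw [← Zsqrtd.im_smul, hβ, Zsqrtd.im_smul]
    linear_combination 125 * b ^ 5 * hke4
  exact hb3 (Int.prime_three.dvd_of_dvd_pow (n := 5) (by omega))

theorem sq_add_mul_pow_ten_ne_pow_five {a : ℤ} (hb : b ≠ 0) (hco : IsCoprime a b) :
    c ^ 2 + 2 ^ 4 * 3 ^ 6 * 5 ^ 7 * b ^ 10 ≠ a ^ 5 := by
  intro h
  have ha5 : ¬ 5 ∣ a := by
    refine not_dvd_of_sq_add_prime_pow_seven_mul_eq_pow_five (c := c)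
      (n := 2 ^ 4 * 3 ^ 6 * b ^ 10) prime_int_five (fun ha hn ↦ ?_) (by linear_combination h)
    have hb5 : ¬ 5 ∣ b := not_dvd_of_prime_of_isCoprime prime_int_five hco.symm ha
    rw [prime_int_five.dvd_mul, prime_int_five.dvd_pow_iff_dvd (by norm_num)] at hn
    exact hn.elim (by norm_num) hb5
  have hmod : 2 ∣ a → 3 ^ 6 * 5 ^ 7 * b ^ 10 % 4 = 1 := by
    intro ha
    have hb_odd : Odd b := Int.isCoprime_two_left.1 (hco.of_isCoprime_of_dvd_left ha)
    rw [show b ^ 10 = (b ^ 5) ^ 2 by ring, Int.mul_emod,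
      Int.sq_mod_four_eq_one_of_odd hb_odd.pow]
    norm_num
  obtain ⟨k, e, A, c', hke, rfl, hA2, h'⟩ := exists_odd_sq_add_eq_mul_pow_five (c := c) hmod
    (by linear_combination h)
  have hA10 : IsCoprime A (10 * b) := by
    refine IsCoprime.mul_right ?_ hco.of_mul_left_right
    exact (Int.isCoprime_two_right.2 hA2).mul_right
      ((Prime.coprime_iff_not_dvd prime_int_five).2 (mt (Dvd.dvd.mul_left · k) ha5)).symm
  by_cases h3 : 3 ∣ A
  · exact sq_add_ne_of_three_dvd hke h3 hA10 h'
  · refine sq_add_ne_of_isCoprime_thirty_mul hke hb ?_ h'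
    have := ((Prime.coprime_iff_not_dvd Int.prime_three).2 h3).symm.mul_right hA10
    rwa [← mul_assoc] at this

end IntegralEquation

/-! ### From rational to integral points -/

section RationalPoints

variable {k : ℕ} {M : ℤ}

theorem exists_sq_eq_den_mul_of_sq_eq {X Y : ℚ} (h : Y ^ 2 = X ^ (2 * k + 1) - M) :
    ∃ w : ℤ, w ^ 2 = X.den * (X.num ^ (2 * k + 1) - M * X.den ^ (2 * k + 1)) := by
  have hX : X * X.den = X.num := X.mul_den_eq_num
  have hsq : (Y * X.den ^ (k + 1)) ^ 2 =
      algebraMap ℤ ℚ (X.den * (X.num ^ (2 * k + 1) - M * X.den ^ (2 * k + 1))) := by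
    simp only [eq_intCast, Int.cast_mul, Int.cast_sub, Int.cast_pow, Int.cast_natCast, ← hX,
      mul_pow, h]
    ring
  obtain ⟨w, hw⟩ := IsIntegrallyClosed.exists_algebraMap_eq_of_isIntegral_pow two_pos
    (hsq ▸ isIntegral_algebraMap : IsIntegral ℤ ((Y * X.den ^ (k + 1)) ^ 2))
  refine ⟨w, (algebraMap ℤ ℚ).injective_int ?_⟩
  rw [map_pow, hw, hsq]

theorem exists_sq_eq_pow_sub_of_sq_eq_mul {p q w : ℤ} (hq : 0 < q) (hpq : IsCoprime p q)
    (h : w ^ 2 = q * (p ^ (2 * k + 1) - M * q ^ (2 * k + 1))) :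
    ∃ b c : ℤ, q = b ^ 2 ∧ c ^ 2 = p ^ (2 * k + 1) - M * q ^ (2 * k + 1) := by
  have hco : IsCoprime q (p ^ (2 * k + 1) - M * q ^ (2 * k + 1)) := by
    have hdvd : q ∣ M * q ^ (2 * k + 1) := (dvd_pow_self q (by omega)).mul_left M
    obtain ⟨t, ht⟩ := hdvd
    rw [ht, sub_eq_add_neg, ← mul_neg]
    exact hpq.symm.pow_right.add_mul_left_right _
  obtain ⟨b, rfl | rfl⟩ := Int.sq_of_isCoprime hco h.symm
  · have hb : b ≠ 0 := by
      rintro rfl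
      simp at hq
    obtain ⟨c, rfl⟩ : b ∣ w := (Int.pow_dvd_pow_iff two_ne_zero).1 (Dvd.intro _ h.symm)
    exact ⟨b, c, rfl, mul_left_cancel₀ (pow_ne_zero 2 hb) (by rw [← mul_pow, h])⟩
  · exact absurd hq (by nlinarith [sq_nonneg b])

theorem exists_integral_solution {X Y : ℚ} (h : Y ^ 2 = X ^ (2 * k + 1) - M) :
    ∃ a b c : ℤ, b ≠ 0 ∧ IsCoprime a b ∧
      c ^ 2 = a ^ (2 * k + 1) - M * b ^ (2 * (2 * k + 1)) := by
  have hco : IsCoprime X.num X.den := Rat.isCoprime_num_den X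
  obtain ⟨w, hw⟩ := exists_sq_eq_den_mul_of_sq_eq h
  obtain ⟨b, c, hb, hc⟩ := exists_sq_eq_pow_sub_of_sq_eq_mul (by exact_mod_cast X.pos) hco hw
  refine ⟨X.num, b, c, ?_, ?_, by rw [hc, hb, pow_mul]⟩
  · rintro rfl
    exact X.den_nz (by exact_mod_cast hb)
  · rw [hb] at hco
    exact (IsCoprime.pow_right_iff two_pos).1 hco

end RationalPoints

theorem no_rational_points_case4 (X Y : ℚ) :
    Y ^ 2 ≠ X ^ 5 - 2 ^ 4 * 3 ^ 6 * 5 ^ 7 := by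
  intro h
  obtain ⟨a, b, c, hb, hco, habc⟩ :=
    exists_integral_solution (k := 2) (M := 2 ^ 4 * 3 ^ 6 * 5 ^ 7) (by exact_mod_cast h)
  exact sq_add_mul_pow_ten_ne_pow_five (c := c) hb hco (by linear_combination habc)
end

section
/- The equation Y² = 3³X⁵ − 2⁴·5⁷ (that is, Y² = 27X⁵ − 1250000) has no rational solutions (X, Y) ∈ ℚ × ℚ. -/
/-!
Writing `3 * X = s / w ^ 2` and `3 * Y = r / w ^ 5` in lowest terms gives
`r ^ 2 + 5 * (1500 * w ^ 5) ^ 2 = s ^ 5` with `s` prime to `5` and `w`.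

Every nonzero ideal `I` of `ℤ[√±5]` is principal or a fractional multiple of `(2, 1 + √±5)`, so
an odd power of `I` can only be principal if `I` is. Hence, when `3 ∤ s`,
`r + 1500 * w ^ 5 * √-5 = (u + v * √-5) ^ 5`, and comparing coefficients of `√-5` gives
`300 * w ^ 5 = v * (u ^ 4 - 10 * u ^ 2 * v ^ 2 + 5 * v ^ 4)`. Both factors are fifth powers up to
the primes `2`, `3`, `5`, and the second is `(u ^ 2 - 5 * v ^ 2) ^ 2 - 5 * (2 * v ^ 2) ^ 2`, a norm
from `ℤ[√5]` (to be divided by `4` when `u` and `v` are both odd). A fifth power norm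
`A ^ 2 - 5 * B ^ 2` with `25 ∣ B` again yields `A + B * √5 = (p + q * √5) ^ 5` (the unit is a fifth
power because `5 ∣ B`), whose `√5`-coefficient factors in the same way, so that
`(p ^ 2 + 5 * q ^ 2, 2 * q ^ 2)` is a smaller pair of the same kind: infinite descent.

When `3 ∣ s`, divide by `9` and multiply by `2 ± √-5`, of norm `9`, to obtain another fifth power
in `ℤ[√-5]`; its `√-5`-coefficient is divisible by `5`, which forces `5 ∣ s`.
-/

open Ideal

namespace QuinticDescent

/-! ### Ideals of `ℤ[√d]` for odd `|d| ≤ 5` -/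

section ZsqrtdIdeals

theorem isDomain_zsqrtd {d : ℤ} (hd : ¬IsSquare d) : IsDomain (ℤ√d) := by
  have norm_eq_zero (z : ℤ√d) : z.norm = 0 ↔ z = 0 :=
    Zsqrtd.norm_eq_zero (fun n hn => hd ⟨n, hn⟩) z
  have : NoZeroDivisors (ℤ√d) := ⟨fun {a b} hab => by
    rwa [← norm_eq_zero, Zsqrtd.norm_mul, mul_eq_zero, norm_eq_zero, norm_eq_zero] at hab⟩
  exact NoZeroDivisors.to_isDomain _

theorem abs_sq_sub_mul_sq_lt_one {K : Type*} [Field K] [LinearOrder K] [IsStrictOrderedRing K]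
    {d x y : K} (hd : |d| ≤ 5) (h : x ^ 2 + 5 * y ^ 2 < 1) : |x ^ 2 - d * y ^ 2| < 1 :=
  calc |x ^ 2 - d * y ^ 2| ≤ |x ^ 2| + |d * y ^ 2| := abs_sub _ _
    _ = x ^ 2 + |d| * y ^ 2 := by rw [abs_mul, abs_sq, abs_sq]
    _ ≤ x ^ 2 + 5 * y ^ 2 := by gcongr
    _ < 1 := h

theorem exists_abs_two_mul_sub_le {K : Type*} [Field K] [LinearOrder K] [IsStrictOrderedRing K]
    [FloorRing K] {y : K} (hy : 3 / 8 < |y - round y|) : ∃ l : ℤ, |2 * y - l| ≤ 1 / 4 := by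
  have hle := abs_le.1 (abs_sub_round y)
  rcases lt_abs.1 hy with hpos | hneg
  · exact ⟨2 * round y + 1, by push_cast; rw [abs_le]; constructor <;> linarith⟩
  · exact ⟨2 * round y - 1, by push_cast; rw [abs_le]; constructor <;> linarith⟩

/- Rounding both coordinates works unless `y` is within `1 / 8` of a half-integer, and then doubling
brings `2 * y` within `1 / 4` of an integer. -/
theorem exists_mul_sub_abs_norm_lt_one {K : Type*} [Field K] [LinearOrder K]
    [IsStrictOrderedRing K] [FloorRing K] {d : K} (hd : |d| ≤ 5) (x y : K) :
    ∃ c k l : ℤ, c ∣ 2 ∧ |(c * x - k) ^ 2 - d * (c * y - l) ^ 2| < 1 := by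
  rcases le_or_gt |y - round y| (3 / 8) with hy | hy
  · refine ⟨1, round x, round y, one_dvd 2, abs_sq_sub_mul_sq_lt_one hd ?_⟩
    have hx := sq_le_sq' (neg_le_of_abs_le (abs_sub_round x)) (le_of_abs_le (abs_sub_round x))
    have hy := sq_le_sq' (neg_le_of_abs_le hy) (le_of_abs_le hy)
    push_cast
    linarith
  · obtain ⟨l, hl⟩ := exists_abs_two_mul_sub_le hy
    refine ⟨2, round (2 * x), l, dvd_rfl, abs_sq_sub_mul_sq_lt_one hd ?_⟩
    have hx := sq_le_sq' (neg_le_of_abs_le (abs_sub_round (2 * x)))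
      (le_of_abs_le (abs_sub_round (2 * x)))
    have hl := sq_le_sq' (neg_le_of_abs_le hl) (le_of_abs_le hl)
    push_cast
    linarith

variable {d : ℤ}

theorem norm_ne_zero [IsDomain (ℤ√d)] {β : ℤ√d} (hβ : β ≠ 0) : β.norm ≠ 0 := by
  have := mul_ne_zero hβ (star_ne_zero.2 hβ)
  rw [← Zsqrtd.norm_eq_mul_conj] at this
  exact_mod_cast this

theorem exists_mul_sub_norm_lt [IsDomain (ℤ√d)] (hd : |d| ≤ 5) (α : ℤ√d) {β : ℤ√d} (hβ : β ≠ 0) :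
    ∃ (c : ℤ) (κ : ℤ√d), c ∣ 2 ∧ |(c * α - β * κ).norm| < |β.norm| := by
  set γ := α * star β with hγ
  obtain ⟨c, k, l, hc, h⟩ := exists_mul_sub_abs_norm_lt_one (K := ℚ) (d := d) (by exact_mod_cast hd)
    (γ.re / β.norm) (γ.im / β.norm)
  refine ⟨c, ⟨k, l⟩, hc, ?_⟩
  have hN : (β.norm : ℚ) ≠ 0 := by exact_mod_cast norm_ne_zero hβ
  have hquot : (((c * α - β * ⟨k, l⟩ : ℤ√d).norm : ℤ) : ℚ) / β.norm =
      (c * (γ.re / β.norm) - k) ^ 2 - d * (c * (γ.im / β.norm) - l) ^ 2 := by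
    have hmul : (c * α - β * ⟨k, l⟩ : ℤ√d).norm * β.norm =
        (c * γ.re - β.norm * k) ^ 2 - d * (c * γ.im - β.norm * l) ^ 2 := by
      simp only [hγ, Zsqrtd.norm_def, Zsqrtd.re_sub, Zsqrtd.im_sub, Zsqrtd.re_mul, Zsqrtd.im_mul,
        Zsqrtd.re_star, Zsqrtd.im_star, Zsqrtd.re_intCast, Zsqrtd.im_intCast]
      ring
    have hmul := congrArg (Int.cast (R := ℚ)) hmul
    push_cast at hmul
    field_simp
    linear_combination hmul
  rw [← hquot, abs_div, div_lt_one (abs_pos.2 hN)] at h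
  exact_mod_cast h

/-- The ideal `(2, 1 + √d)` of `ℤ[√d]`; for odd `d` it is the unique prime above `2`. -/
def primeAboveTwo (d : ℤ) : Ideal (ℤ√d) := span {2, ⟨1, 1⟩}

theorem span_two_mk_eq_primeAboveTwo {x y : ℤ} (hx : Odd x) (hy : Odd y) :
    span {(2 : ℤ√d), ⟨x, y⟩} = primeAboveTwo d := by
  obtain ⟨k, rfl⟩ := hx
  obtain ⟨l, rfl⟩ := hy
  have : (⟨2 * k + 1, 2 * l + 1⟩ : ℤ√d) = ⟨1, 1⟩ + ⟨k, l⟩ * 2 := by ext <;> simp <;> ring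
  rw [this, span_pair_add_mul_left, primeAboveTwo]

theorem two_dvd_mk {x y : ℤ} (hx : Even x) (hy : Even y) : (2 : ℤ√d) ∣ ⟨x, y⟩ :=
  mod_cast (Zsqrtd.intCast_dvd 2 ⟨x, y⟩).2 ⟨hx.two_dvd, hy.two_dvd⟩

theorem eq_top_of_two_mem_of_odd_norm {J : Ideal (ℤ√d)} (h2 : 2 ∈ J) {x : ℤ√d} (hx : x ∈ J)
    (hodd : Odd x.norm) : J = ⊤ := by
  obtain ⟨k, hk⟩ := hodd
  have hnorm : (x.norm : ℤ√d) ∈ J := by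
    rw [Zsqrtd.norm_eq_mul_conj]
    exact J.mul_mem_right _ hx
  rw [eq_top_iff_one]
  have := J.sub_mem hnorm (J.mul_mem_right (k : ℤ√d) h2)
  rw [hk] at this
  simpa using this

theorem eq_top_or_eq_span_two_or_eq_primeAboveTwo (hd : Odd d) {J : Ideal (ℤ√d)} (h2 : 2 ∈ J) :
    J = ⊤ ∨ J = span {2} ∨ J = primeAboveTwo d := by
  have h2J : span {2} ≤ J := (span_singleton_le_iff_mem J).2 h2
  by_cases hnorm : ∃ x ∈ J, Odd x.norm
  · obtain ⟨x, hx, hodd⟩ := hnorm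
    exact .inl (eq_top_of_two_mem_of_odd_norm h2 hx hodd)
  have hpar (x : ℤ√d) (hx : x ∈ J) : Even x.re ↔ Even x.im := by
    have : Even x.norm := Int.not_odd_iff_even.1 fun hodd => hnorm ⟨x, hx, hodd⟩
    simpa [Zsqrtd.norm_def, Int.even_sub, Int.even_mul, Int.not_even_iff_odd.2 hd] using this
  right
  by_cases hodd : ∃ x ∈ J, Odd x.re
  · right
    obtain ⟨x, hx, hre⟩ := hodd
    have him : Odd x.im := by rwa [← Int.not_even_iff_odd, ← hpar x hx, Int.not_even_iff_odd]
    apply le_antisymm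
    · intro y hy
      rcases Int.even_or_odd y.re with hye | hyo
      · rw [primeAboveTwo]
        exact span_mono (by simp) (mem_span_singleton.2 (two_dvd_mk hye ((hpar y hy).1 hye)))
      · have hyim : Odd y.im := by
          rwa [← Int.not_even_iff_odd, ← hpar y hy, Int.not_even_iff_odd]
        rw [← span_two_mk_eq_primeAboveTwo hyo hyim]
        exact subset_span (by simp)
    · rw [← span_two_mk_eq_primeAboveTwo hre him, span_le]
      simp [Set.insert_subset_iff, h2, hx]
  · left
    refine le_antisymm (fun y hy => mem_span_singleton.2 ?_) h2J
    have hre : Even y.re := Int.not_odd_iff_even.1 fun hre => hodd ⟨y, hy, hre⟩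
    exact two_dvd_mk hre ((hpar y hy).1 hre)

theorem exists_ne_zero_forall_mem_dvd_two_mul [IsDomain (ℤ√d)] (hd : |d| ≤ 5) {I : Ideal (ℤ√d)}
    (hI : I ≠ ⊥) : ∃ β ∈ I, β ≠ 0 ∧ ∀ α ∈ I, β ∣ 2 * α := by
  obtain ⟨β, ⟨hβI, hβ⟩, hmin⟩ := exists_minimalFor_of_wellFoundedLT (fun x => x ∈ I ∧ x ≠ 0)
    (fun x : ℤ√d => x.norm.natAbs) (Submodule.exists_mem_ne_zero_of_ne_bot hI)
  refine ⟨β, hβI, hβ, fun α hα => ?_⟩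
  obtain ⟨c, κ, ⟨e, he⟩, hlt⟩ := exists_mul_sub_norm_lt hd α hβ
  have hmem : c * α - β * κ ∈ I := I.sub_mem (I.mul_mem_left _ hα) (I.mul_mem_right _ hβI)
  have hzero : c * α - β * κ = 0 := by
    by_contra hne
    have hle := hmin ⟨hmem, hne⟩ (by zify; exact hlt.le)
    zify at hle
    exact absurd hlt hle.not_gt
  have h2 : (2 : ℤ√d) = c * e := by exact_mod_cast he
  exact ⟨e * κ, by rw [h2]; linear_combination e * hzero⟩

theorem exists_eq_span_singleton_mul {R : Type*} [CommRing R] {I : Ideal R} {x : R}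
    (h : I ≤ span {x}) : ∃ J : Ideal R, I = span {x} * J := by
  refine ⟨Submodule.comap (LinearMap.mulLeft R x) I, (eq_span_singleton_mul _ _).2 ⟨?_, ?_⟩⟩
  · intro y hy
    obtain ⟨z, rfl⟩ := mem_span_singleton.1 (h hy)
    exact ⟨z, hy, rfl⟩
  · exact fun z hz => hz

theorem isPrincipal_of_span_singleton_mul {R : Type*} [CommRing R] [IsDomain R] {I : Ideal R}
    {a b : R} (ha : a ≠ 0) (h : span {a} * I = span {b}) : ∃ c, I = span {c} := by
  obtain ⟨c, -, rfl⟩ := mem_span_singleton_mul.1 (h ▸ mem_span_singleton_self b)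
  exact ⟨c, (span_singleton_mul_right_inj ha).1
    (h.trans (span_singleton_mul_span_singleton a c).symm)⟩

theorem exists_eq_span_or_two_mul_eq [IsDomain (ℤ√d)] (hd : |d| ≤ 5) (hodd : Odd d)
    {I : Ideal (ℤ√d)} (hI : I ≠ ⊥) :
    ∃ β ≠ 0, I = span {β} ∨ span {2} * I = span {β} * primeAboveTwo d := by
  obtain ⟨β, hβI, hβ, hdvd⟩ := exists_ne_zero_forall_mem_dvd_two_mul hd hI
  have hle : span {2} * I ≤ span {β} :=
    span_singleton_mul_le_iff.2 fun α hα => mem_span_singleton.2 (hdvd α hα)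
  obtain ⟨J, hJ⟩ := exists_eq_span_singleton_mul hle
  have h2J : 2 ∈ J := by
    have : 2 * β ∈ span {β} * J := hJ ▸ mul_mem_mul (mem_span_singleton_self 2) hβI
    obtain ⟨γ, hγJ, hγ⟩ := mem_span_singleton_mul.1 this
    rwa [mul_left_cancel₀ hβ (hγ.trans (mul_comm 2 β))] at hγJ
  rcases eq_top_or_eq_span_two_or_eq_primeAboveTwo hodd h2J with rfl | rfl | rfl
  · rw [mul_top] at hJ
    obtain ⟨γ, rfl⟩ := isPrincipal_of_span_singleton_mul two_ne_zero hJ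
    exact ⟨γ, fun hγ => hI (by rw [hγ, span_singleton_zero]), .inl rfl⟩
  · rw [mul_comm (span {β})] at hJ
    exact ⟨β, hβ, .inl ((span_singleton_mul_right_inj two_ne_zero).1 hJ)⟩
  · exact ⟨β, hβ, .inr hJ⟩

theorem primeAboveTwo_sq_of_emod_four_eq_three (hd : d % 4 = 3) :
    primeAboveTwo d ^ 2 = span {2} := by
  obtain ⟨k, rfl⟩ : ∃ k, d = 4 * k + 3 := ⟨d / 4, by omega⟩
  have hmk : (⟨1, 1⟩ : ℤ√(4 * k + 3)) * ⟨1, 1⟩ = 2 * (⟨1, 1⟩ + (2 * k + 1 : ℤ)) := by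
    ext <;> simp; ring
  rw [sq, primeAboveTwo]
  apply le_antisymm
  · rw [span_pair_mul_span_pair, span_le]
    simp only [Set.insert_subset_iff, Set.singleton_subset_iff, SetLike.mem_coe,
      mem_span_singleton, hmk, dvd_mul_right, dvd_mul_left, and_self]
  · rw [span_singleton_le_iff_mem]
    set P := span {(2 : ℤ√(4 * k + 3)), ⟨1, 1⟩}
    have h2 : 2 ∈ P := subset_span (by simp)
    have h11 : ⟨1, 1⟩ ∈ P := subset_span (by simp)
    have := sub_mem (sub_mem (mul_mem_mul h11 h11) (mul_mem_mul h2 h11))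
      (mul_mem_right (k : ℤ√(4 * k + 3)) _ (mul_mem_mul h2 h2))
    convert this using 1
    rw [hmk]
    push_cast
    ring

theorem primeAboveTwo_sq_of_emod_four_eq_one (hd : d % 4 = 1) :
    primeAboveTwo d ^ 2 = span {2} * primeAboveTwo d := by
  obtain ⟨k, rfl⟩ : ∃ k, d = 4 * k + 1 := ⟨d / 4, by omega⟩
  have hmk : (⟨1, 1⟩ : ℤ√(4 * k + 1)) * ⟨1, 1⟩ = 2 * (⟨1, 1⟩ + k * 2) := by
    ext <;> simp; ring
  rw [sq, primeAboveTwo]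
  have h2 : 2 ∈ span {(2 : ℤ√(4 * k + 1)), ⟨1, 1⟩} := subset_span (by simp)
  have h11 : ⟨1, 1⟩ ∈ span {(2 : ℤ√(4 * k + 1)), ⟨1, 1⟩} := subset_span (by simp)
  apply le_antisymm
  · rw [span_pair_mul_span_pair, span_le]
    simp only [Set.insert_subset_iff, Set.singleton_subset_iff, SetLike.mem_coe,
      mem_span_singleton_mul]
    exact ⟨⟨_, h2, rfl⟩, ⟨_, h11, rfl⟩, ⟨_, h11, mul_comm _ _⟩,
      ⟨_, add_mem h11 (mul_mem_left _ _ h2), hmk.symm⟩⟩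
  · exact mul_mono_left ((span_singleton_le_iff_mem _).2 h2)

theorem exists_span_singleton_mul_pow_three_eq [IsDomain (ℤ√d)] (hd : |d| ≤ 5) (hodd : Odd d)
    {I : Ideal (ℤ√d)} (hI : I ≠ ⊥) :
    ∃ a b : ℤ√d, b ≠ 0 ∧ span {a} * I ^ 3 = span {b} * I := by
  obtain ⟨β, hβ, rfl | h⟩ := exists_eq_span_or_two_mul_eq hd hodd hI
  · exact ⟨1, β ^ 2, pow_ne_zero 2 hβ, by
      simp only [span_singleton_pow, span_singleton_mul_span_singleton]; ring_nf⟩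
  have hsq : span {2} ^ 2 * I ^ 2 = span {β} ^ 2 * primeAboveTwo d ^ 2 := by
    rw [← mul_pow, h, mul_pow]
  rcases (by have := Int.odd_iff.1 hodd; omega : d % 4 = 3 ∨ d % 4 = 1) with hd4 | hd4
  · refine ⟨2, β ^ 2, pow_ne_zero 2 hβ,
      (span_singleton_mul_right_inj (two_ne_zero : (2 : ℤ√d) ≠ 0)).1 ?_⟩
    rw [← span_singleton_pow]
    calc span {2} * (span {2} * I ^ 3) = span {2} ^ 2 * I ^ 2 * I := by ring
      _ = span {2} * (span {β} ^ 2 * I) := by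
        rw [hsq, primeAboveTwo_sq_of_emod_four_eq_three hd4]; ring
  · have hI2 : I ^ 2 = span {β} * I := by
      refine (span_singleton_mul_right_inj (pow_ne_zero 2 (two_ne_zero : (2 : ℤ√d) ≠ 0))).1 ?_
      rw [← span_singleton_pow, hsq, primeAboveTwo_sq_of_emod_four_eq_one hd4]
      calc span {β} ^ 2 * (span {2} * primeAboveTwo d)
          = span {2} * span {β} * (span {β} * primeAboveTwo d) := by ring
        _ = span {2} ^ 2 * (span {β} * I) := by rw [← h]; ring
    refine ⟨1, β ^ 2, pow_ne_zero 2 hβ, ?_⟩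
    rw [← span_singleton_pow, span_singleton_one, top_mul, pow_succ, hI2, mul_assoc, ← sq, hI2]
    ring

theorem span_mul_pow_two_mul_add_one {R : Type*} [CommRing R] {I : Ideal R} {a b : R}
    (h : span {a} * I ^ 3 = span {b} * I) (j : ℕ) :
    span {a ^ j} * I ^ (2 * j + 1) = span {b ^ j} * I := by
  rw [← span_singleton_pow, ← span_singleton_pow]
  induction j with
  | zero => simp
  | succ j ih =>
    calc span {a} ^ (j + 1) * I ^ (2 * (j + 1) + 1)
        = (span {a} ^ j * I ^ (2 * j + 1)) * (span {a} * I ^ 2) := by ring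
      _ = span {b} ^ j * (span {a} * I ^ 3) := by rw [ih]; ring
      _ = span {b} ^ (j + 1) * I := by rw [h]; ring

theorem exists_isUnit_mul_pow_eq_of_pow_eq_span [IsDomain (ℤ√d)] (hd : |d| ≤ 5) (hodd : Odd d)
    {I : Ideal (ℤ√d)} {z : ℤ√d} (hz : z ≠ 0) {k : ℕ} (hk : Odd k) (h : I ^ k = span {z}) :
    ∃ ε α : ℤ√d, IsUnit ε ∧ z = ε * α ^ k := by
  have hI : I ≠ ⊥ := by
    rintro rfl
    rw [Ideal.bot_pow hk.pos.ne', eq_comm, span_singleton_eq_bot] at h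
    exact hz h
  obtain ⟨a, b, hb, hab⟩ := exists_span_singleton_mul_pow_three_eq hd hodd hI
  obtain ⟨α, rfl⟩ : ∃ α, I = span {α} := by
    obtain ⟨j, rfl⟩ := hk
    have := span_mul_pow_two_mul_add_one hab j
    rw [h, span_singleton_mul_span_singleton] at this
    exact isPrincipal_of_span_singleton_mul (pow_ne_zero j hb) this.symm
  rw [span_singleton_pow, span_singleton_eq_span_singleton] at h
  obtain ⟨ε, hε⟩ := h
  exact ⟨ε, α, ε.isUnit, by rw [← hε, mul_comm]⟩

theorem span_pair_mul_span_pair_pow {R : Type*} [CommRing R] {z z' c n : R} {k : ℕ}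
    (h : z * z' = c * n ^ k) (hn : IsCoprime n (z + z')) :
    span {c, z} * span {z, n} ^ k = span {z} := by
  have hn_mem : n ^ k ∈ span {z, n} ^ k := pow_mem_pow (subset_span (by simp)) k
  apply le_antisymm
  · rw [← mk_ker (I := span {z}), ← map_eq_bot_iff_le_ker, Ideal.map_mul, Ideal.map_pow, map_span,
      map_span, Set.image_pair, Set.image_pair]
    have hz : Ideal.Quotient.mk (span {z}) z = 0 :=
      Quotient.eq_zero_iff_mem.2 (mem_span_singleton_self z)
    rw [hz, span_insert_zero, span_singleton_pow, span_pair_comm, span_insert_zero,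
      span_singleton_mul_span_singleton, ← map_pow, ← map_mul, ← h, map_mul, hz, zero_mul,
      span_singleton_zero]
  · rw [span_singleton_le_iff_mem]
    obtain ⟨a, b, hab⟩ := hn.pow (m := k) (n := k)
    obtain ⟨w, hw⟩ : z' ∣ (z + z') ^ k - z ^ k := by
      simpa using sub_dvd_pow_sub_pow (z + z') z k
    have hsplit : z = (a * z + b * w * c) * n ^ k + b * (z * z ^ k) := by
      linear_combination (-z) * hab + b * z * hw + b * w * h
    have hcz : a * z + b * w * c ∈ span {c, z} :=
      add_mem (mul_mem_left _ a (subset_span (by simp)))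
        (mul_mem_left _ (b * w) (subset_span (by simp)))
    have := add_mem (mul_mem_mul hcz hn_mem)
      (mul_mem_left _ b (mul_mem_mul (subset_span (by simp) : z ∈ span {c, z})
        (pow_mem_pow (subset_span (by simp) : z ∈ span {z, n}) k)))
    rwa [← hsplit] at this

theorem isCoprime_sq_sub_mul_sq {x y : ℤ} (h : IsCoprime x (d * y)) :
    IsCoprime (x ^ 2 - d * y ^ 2) x := by
  have : IsCoprime (-(d * y * y)) x :=
    (h.symm.mul_left (h.of_mul_right_right).symm).neg_left
  rw [show x ^ 2 - d * y ^ 2 = -(d * y * y) + x * x by ring]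
  exact this.add_mul_left_left x

theorem span_intCast_mk_mul_span_mk_intCast_pow {x y c n : ℤ} {k : ℕ} (hk : k ≠ 0)
    (h : x ^ 2 - d * y ^ 2 = c * n ^ k) (hxy : IsCoprime x (d * y)) (hn : Odd n) :
    span {(c : ℤ√d), ⟨x, y⟩} * span {⟨x, y⟩, (n : ℤ√d)} ^ k = span {⟨x, y⟩} := by
  have hnx : IsCoprime n (2 * x) := by
    refine (Int.isCoprime_two_right.2 hn).mul_right
      ((isCoprime_sq_sub_mul_sq hxy).of_isCoprime_of_dvd_left ?_)
    exact h ▸ (dvd_pow_self n hk).mul_left c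
  apply span_pair_mul_span_pair_pow (z' := star ⟨x, y⟩)
  · have hnorm : (⟨x, y⟩ : ℤ√d).norm = c * n ^ k := by
      rw [Zsqrtd.norm_def]
      linear_combination h
    rw [← Zsqrtd.norm_eq_mul_conj, hnorm]
    push_cast
    rfl
  · convert hnx.intCast (R := ℤ√d) using 1
    ext <;> simp [two_mul]

theorem mk_ne_zero_of_isCoprime {x y : ℤ} (h : IsCoprime x (d * y)) : (⟨x, y⟩ : ℤ√d) ≠ 0 := by
  intro h0
  obtain ⟨rfl, rfl⟩ : x = 0 ∧ y = 0 := Zsqrtd.ext_iff.1 h0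
  exact not_isCoprime_zero_zero (by simpa using h)

theorem exists_isUnit_mul_pow_eq_mk [IsDomain (ℤ√d)] (hd : |d| ≤ 5) (hodd : Odd d) {x y n : ℤ}
    {k : ℕ} (hk : Odd k) (h : x ^ 2 - d * y ^ 2 = n ^ k) (hxy : IsCoprime x (d * y))
    (hn : Odd n) : ∃ ε α : ℤ√d, IsUnit ε ∧ ⟨x, y⟩ = ε * α ^ k := by
  have hspan := span_intCast_mk_mul_span_mk_intCast_pow (c := 1) hk.pos.ne' (by rw [h, one_mul])
    hxy hn
  rw [Int.cast_one, (eq_top_iff_one _).2 (subset_span (by simp)), top_mul] at hspan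
  exact exists_isUnit_mul_pow_eq_of_pow_eq_span hd hodd (mk_ne_zero_of_isCoprime hxy) hk hspan

theorem exists_isUnit_mul_pow_eq_two_pow_mul_mk [IsDomain (ℤ√d)] (hd : |d| ≤ 5) (hd4 : d % 4 = 3)
    {x y n : ℤ} {j : ℕ} (h : x ^ 2 - d * y ^ 2 = 2 * n ^ (2 * j + 1)) (hxy : IsCoprime x (d * y))
    (hx : Odd x) (hy : Odd y) (hn : Odd n) :
    ∃ ε α : ℤ√d, IsUnit ε ∧ 2 ^ j * ⟨x, y⟩ = ε * α ^ (2 * j + 1) := by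
  have hspan := span_intCast_mk_mul_span_mk_intCast_pow (c := 2) (by omega) h hxy hn
  rw [Int.cast_ofNat, span_two_mk_eq_primeAboveTwo hx hy] at hspan
  refine exists_isUnit_mul_pow_eq_of_pow_eq_span hd (Int.odd_iff.2 (by omega))
    (mul_ne_zero (pow_ne_zero j two_ne_zero) (mk_ne_zero_of_isCoprime hxy)) (odd_two_mul_add_one j)
    (I := primeAboveTwo d * span {⟨x, y⟩, (n : ℤ√d)}) ?_
  rw [mul_pow, pow_succ (primeAboveTwo d), pow_mul, primeAboveTwo_sq_of_emod_four_eq_three hd4,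
    mul_assoc, hspan, span_singleton_pow, span_singleton_mul_span_singleton]

end ZsqrtdIdeals

/-! ### Fifth powers in `ℤ[√-5]` -/

section MinusFive

theorem int_prime_five : Prime (5 : ℤ) := by norm_num

theorem sq_emod_four (x : ℤ) : x ^ 2 % 4 = x % 2 := by
  rcases Int.even_or_odd x with hx | hx
  · rw [Int.even_iff.1 hx]
    exact Int.emod_eq_zero_of_dvd (pow_dvd_pow_of_dvd hx.two_dvd 2)
  · rw [Int.odd_iff.1 hx, Int.sq_mod_four_eq_one_of_odd hx]

theorem not_even_and_even_of_isCoprime {a b : ℤ} (h : IsCoprime a b) : ¬(Even a ∧ Even b) :=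
  fun ⟨ha, hb⟩ => Int.prime_two.not_isUnit (h.isUnit_of_dvd' ha.two_dvd hb.two_dvd)

theorem not_four_dvd_sq_add_five_mul_sq {a b : ℤ} (h : IsCoprime a b) :
    ¬4 ∣ a ^ 2 + 5 * b ^ 2 := by
  have hab := not_even_and_even_of_isCoprime h
  rw [Int.even_iff, Int.even_iff] at hab
  have ha := sq_emod_four a
  have hb := sq_emod_four b
  omega

theorem isCoprime_neg_five_mul_of_sq_add_eq {x y c n : ℤ} (hxy : IsCoprime x y) (hc : ¬5 ∣ c)
    (h : x ^ 2 + 5 * y ^ 2 = c * n ^ 5) : IsCoprime x (-5 * y) := by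
  refine .mul_right (IsCoprime.neg_right (int_prime_five.coprime_iff_not_dvd.2 ?_).symm) hxy
  rintro ⟨x', rfl⟩
  have hn : 5 ∣ c * n ^ 5 := h ▸ ⟨5 * x' ^ 2 + y ^ 2, by ring⟩
  obtain ⟨n', rfl⟩ :=
    int_prime_five.dvd_of_dvd_pow ((int_prime_five.dvd_or_dvd hn).resolve_left hc)
  have hy : 5 ∣ y := int_prime_five.dvd_of_dvd_pow (n := 2)
    ⟨125 * c * n' ^ 5 - x' ^ 2, by linarith⟩
  exact int_prime_five.not_isUnit (hxy.isUnit_of_dvd' (dvd_mul_right 5 x') hy)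

theorem pow_five_eq_self_of_isUnit {ε : ℤ√(-5)} (hε : IsUnit ε) : ε ^ 5 = ε := by
  have h := (Zsqrtd.norm_eq_one_iff' (by norm_num) ε).2 hε
  rw [Zsqrtd.norm_def] at h
  have him : ε.im = 0 := by nlinarith
  obtain hre | hre : ε.re = 1 ∨ ε.re = -1 := by
    rw [him] at h
    exact mul_self_eq_one_iff.1 (by linarith)
  · rw [show ε = 1 from Zsqrtd.ext hre him, one_pow]
  · rw [show ε = -1 from Zsqrtd.ext hre him, Odd.neg_one_pow (by decide)]

instance isDomain_zsqrtd_neg_five : IsDomain (ℤ√(-5)) :=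
  isDomain_zsqrtd fun h => absurd h.nonneg (by norm_num)

theorem exists_pow_five_eq_mk_of_isCoprime {x y n : ℤ} (hxy : IsCoprime x y)
    (h : x ^ 2 + 5 * y ^ 2 = n ^ 5) : ∃ α : ℤ√(-5), ⟨x, y⟩ = α ^ 5 := by
  have hn : Odd n := by
    by_contra hn
    refine not_four_dvd_sq_add_five_mul_sq hxy (h ▸ ?_)
    exact (by norm_num : (4 : ℤ) ∣ 2 ^ 5).trans
      (pow_dvd_pow_of_dvd (Int.not_odd_iff_even.1 hn).two_dvd 5)
  obtain ⟨ε, α, hε, hα⟩ := exists_isUnit_mul_pow_eq_mk (d := -5) (k := 5) (by norm_num) (by decide)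
    (by decide) (by linarith) (isCoprime_neg_five_mul_of_sq_add_eq hxy (c := 1) (by norm_num)
    (by linarith)) hn
  exact ⟨ε * α, by rw [hα, mul_pow, pow_five_eq_self_of_isUnit hε]⟩

theorem exists_pow_five_eq_four_mul_mk_of_isCoprime {a b m : ℤ} (hab : IsCoprime a b)
    (h : a ^ 2 + 5 * b ^ 2 = 2 * m ^ 5) : ∃ α : ℤ√(-5), ⟨4 * a, 4 * b⟩ = α ^ 5 := by
  have h4 := not_four_dvd_sq_add_five_mul_sq hab
  have hm : Odd m := by
    by_contra hm
    obtain ⟨m', rfl⟩ := (Int.not_odd_iff_even.1 hm).two_dvd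
    exact h4 ⟨16 * m' ^ 5, by linarith⟩
  obtain ⟨ha, hb⟩ : Odd a ∧ Odd b := by
    have hnot := not_even_and_even_of_isCoprime hab
    have hsum : Even (a ^ 2 + 5 * b ^ 2) := h ▸ even_two_mul _
    rw [Int.even_add, Int.even_mul, Int.even_pow' two_ne_zero, Int.even_pow' two_ne_zero] at hsum
    have : ¬Even (5 : ℤ) := by decide
    rw [← Int.not_even_iff_odd, ← Int.not_even_iff_odd]
    tauto
  obtain ⟨ε, α, hε, hα⟩ := exists_isUnit_mul_pow_eq_two_pow_mul_mk (d := -5) (j := 2) (n := m)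
    (by norm_num) (by norm_num) (by linear_combination h)
    (isCoprime_neg_five_mul_of_sq_add_eq hab (c := 2) (by norm_num) h) ha hb hm
  refine ⟨ε * α, ?_⟩
  rw [mul_pow, pow_five_eq_self_of_isUnit hε, ← hα]
  ext <;> simp [sq]

theorem exists_pow_five_eq_mk_of_gcd_dvd_four {x y n : ℤ} (hgcd : Int.gcd x y ∣ 4)
    (h : x ^ 2 + 5 * y ^ 2 = n ^ 5) : ∃ α : ℤ√(-5), ⟨x, y⟩ = α ^ 5 := by
  have hpos : 0 < Int.gcd x y := Nat.pos_of_dvd_of_pos hgcd (by norm_num)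
  obtain ⟨a, b, hab, hx, hy⟩ := Int.exists_gcd_one hpos
  rw [← Int.isCoprime_iff_gcd_eq_one] at hab
  have hcases : Int.gcd x y ∈ Nat.divisors 4 := Nat.mem_divisors.2 ⟨hgcd, by norm_num⟩
  rw [show Nat.divisors 4 = {1, 2, 4} by decide, Finset.mem_insert, Finset.mem_insert,
    Finset.mem_singleton] at hcases
  have heven {c : ℤ} (hn : n ^ 5 = 2 * c) : 2 ∣ n := Int.prime_two.dvd_of_dvd_pow ⟨c, hn⟩
  rcases hcases with hg | hg | hg
  · exact exists_pow_five_eq_mk_of_isCoprime (Int.isCoprime_iff_gcd_eq_one.2 hg) h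
  all_goals
    rw [hg] at hx hy
    push_cast at hx hy
    subst hx hy
  · obtain ⟨m, rfl⟩ := heven (c := 2 * (a ^ 2 + 5 * b ^ 2)) (by linarith)
    exact absurd ⟨2 * m ^ 5, by linarith⟩ (not_four_dvd_sq_add_five_mul_sq hab)
  · obtain ⟨m, rfl⟩ := heven (c := 8 * (a ^ 2 + 5 * b ^ 2)) (by linarith)
    rw [mul_comm a, mul_comm b]
    exact exists_pow_five_eq_four_mul_mk_of_isCoprime hab (m := m) (by linarith)

end MinusFive

/-- For `d ^ 2 = 25` the `√d`-coefficient of `(p + q * √d) ^ 5` is `5 * q * quinticForm d p q`. -/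
def quinticForm (d p q : ℤ) : ℤ := p ^ 4 + 2 * d * p ^ 2 * q ^ 2 + 5 * q ^ 4

theorem im_pow_five {d : ℤ} (hd : d ^ 2 = 25) (α : ℤ√d) :
    (α ^ 5).im = 5 * (α.im * quinticForm d α.re α.im) := by
  simp only [pow_succ, pow_zero, one_mul, Zsqrtd.re_mul, Zsqrtd.im_mul, quinticForm]
  linear_combination α.im ^ 5 * hd

/-! ### Fifth powers in `ℤ[√5]` -/

section Five

instance isDomain_zsqrtd_five : IsDomain (ℤ√5) :=
  isDomain_zsqrtd int_prime_five.not_isSquare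

/-- The fundamental solution `(9, 4)` of `x ^ 2 - 5 * y ^ 2 = 1`. -/
def pellFive : Pell.Solution₁ 5 := .mk 9 4 (by norm_num)

theorem isFundamental_pellFive : Pell.IsFundamental pellFive := by
  refine ⟨by simp [pellFive], by simp [pellFive], fun {b} hb => ?_⟩
  by_contra! hlt
  rw [pellFive, Pell.Solution₁.x_mk] at hlt
  have hsq := b.prop_x
  generalize b.x = x at hb hlt hsq
  generalize b.y = y at hsq
  have hlow : -4 < y := by nlinarith
  have hupp : y < 4 := by nlinarith
  interval_cases y <;> interval_cases x <;> omega

/-- The homomorphism `x + y * √5 ↦ x * y` from norm-one units to `ℤ / 5`; it is multiplicative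
because `x ^ 2 = 1` modulo `5`. -/
def pellResidue : Pell.Solution₁ 5 →* Multiplicative (ZMod 5) where
  toFun u := .ofAdd (u.x * u.y : ℤ)
  map_one' := by simp
  map_mul' u v := by
    have hu := congrArg (Int.cast (R := ZMod 5)) u.prop_x
    have hv := congrArg (Int.cast (R := ZMod 5)) v.prop_x
    have h5 : (5 : ZMod 5) = 0 := rfl
    rw [← ofAdd_add, Equiv.apply_eq_iff_eq]
    push_cast [Pell.Solution₁.x_mul, Pell.Solution₁.y_mul] at hu hv ⊢
    rw [h5] at hu hv ⊢
    linear_combination v.x * v.y * hu + u.x * u.y * hv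

theorem pellResidue_apply (u : Pell.Solution₁ 5) :
    pellResidue u = .ofAdd ((u.x * u.y : ℤ) : ZMod 5) := rfl

theorem exists_pow_five_eq_of_five_dvd_y {u : Pell.Solution₁ 5} (hu : 5 ∣ u.y) :
    ∃ g, u = g ^ 5 := by
  have hres : pellResidue u = 1 := by
    rw [pellResidue_apply, (ZMod.intCast_zmod_eq_zero_iff_dvd _ 5).2 (hu.mul_left u.x), ofAdd_zero]
  have hf (n : ℤ) : pellResidue (pellFive ^ n) = .ofAdd (n : ZMod 5) := by
    rw [map_zpow, show pellResidue pellFive = .ofAdd 1 by decide, ← ofAdd_zsmul, zsmul_one]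
  have hneg (v : Pell.Solution₁ 5) : pellResidue (-v) = pellResidue v := by
    rw [pellResidue_apply, pellResidue_apply, Pell.Solution₁.x_neg, Pell.Solution₁.y_neg,
      neg_mul_neg]
  obtain ⟨n, hn⟩ := isFundamental_pellFive.eq_zpow_or_neg_zpow u
  obtain ⟨m, rfl⟩ : 5 ∣ n := by
    refine (ZMod.intCast_zmod_eq_zero_iff_dvd n 5).1 (Multiplicative.ofAdd.injective ?_)
    rw [← hf, ofAdd_zero, ← hres]
    rcases hn with rfl | rfl
    · rfl
    · rw [hneg]
  rw [mul_comm, zpow_mul] at hn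
  rcases hn with hn | hn
  · exact ⟨pellFive ^ m, hn⟩
  · exact ⟨-pellFive ^ m, by rw [Odd.neg_pow (by decide)]; exact hn⟩

theorem exists_pow_five_eq_of_isUnit {ε : ℤ√5} (hε : IsUnit ε) (h5 : 5 ∣ ε.im) :
    ∃ η, ε = η ^ 5 := by
  have hnorm : (ε ^ 2).norm = 1 := by
    rw [sq, Zsqrtd.norm_mul, ← sq, ← Int.natAbs_sq, Zsqrtd.norm_eq_one_iff.2 hε]
    rfl
  have hpell : (ε ^ 2).re ^ 2 - 5 * (ε ^ 2).im ^ 2 = 1 := by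
    rw [Zsqrtd.norm_def] at hnorm
    linear_combination hnorm
  have him : 5 ∣ (ε ^ 2).im := by
    rw [sq, Zsqrtd.im_mul]
    exact dvd_add (h5.mul_left _) (h5.mul_right _)
  obtain ⟨g, hg⟩ := exists_pow_five_eq_of_five_dvd_y (u := .mk _ _ hpell) him
  have hg : ε ^ 2 = (g : ℤ√5) ^ 5 := congrArg Subtype.val hg
  have hstar : ε ^ 2 * star (ε ^ 2) = 1 := by
    rw [← Zsqrtd.norm_eq_mul_conj, hnorm, Int.cast_one]
  refine ⟨ε * star (g : ℤ√5) ^ 2, ?_⟩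
  calc ε = ε * (ε ^ 2 * star (ε ^ 2)) ^ 2 := by rw [hstar, one_pow, mul_one]
    _ = ε ^ 5 * star (ε ^ 2) ^ 2 := by ring
    _ = (ε * star (g : ℤ√5) ^ 2) ^ 5 := by rw [hg, star_pow]; ring

theorem exists_pow_five_eq_mk_of_five_dvd {x y n : ℤ} (hxy : IsCoprime x y)
    (h : x ^ 2 - 5 * y ^ 2 = n ^ 5) (hn : Odd n) (hy : 5 ∣ y) :
    ∃ α : ℤ√5, ⟨x, y⟩ = α ^ 5 := by
  have hx : ¬5 ∣ x := fun hx => int_prime_five.not_isUnit (hxy.isUnit_of_dvd' hx hy)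
  obtain ⟨ε, α, hε, hα⟩ := exists_isUnit_mul_pow_eq_mk (k := 5) (by norm_num) (by decide)
    (by decide) h ((int_prime_five.coprime_iff_not_dvd.2 hx).symm.mul_right hxy) hn
  obtain ⟨hre, him⟩ : x = (ε * α ^ 5).re ∧ y = (ε * α ^ 5).im := Zsqrtd.ext_iff.1 hα
  rw [Zsqrtd.re_mul] at hre
  rw [Zsqrtd.im_mul] at him
  have hαim : 5 ∣ (α ^ 5).im := ⟨_, im_pow_five (by norm_num) α⟩
  have hαre : ¬5 ∣ (α ^ 5).re := fun hdvd =>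
    hx (hre ▸ dvd_add (hdvd.mul_left _) ((dvd_mul_right 5 _).mul_right _))
  have hεim : 5 ∣ ε.im := by
    have : 5 ∣ ε.im * (α ^ 5).re :=
      (Int.dvd_add_right (hαim.mul_left ε.re)).1 (him ▸ hy)
    exact (int_prime_five.dvd_or_dvd this).resolve_right hαre
  obtain ⟨η, rfl⟩ := exists_pow_five_eq_of_isUnit hε hεim
  exact ⟨η * α, by rw [hα, mul_pow]⟩

end Five

/-! ### Powers up to given primes -/

section PowUpTo

/-- `B` becomes a `k`-th power after multiplication by an integer built from primes of `N`. -/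
def IsPowUpTo (N : ℤ) (k : ℕ) (B : ℤ) : Prop := ∃ M t, (∃ n : ℕ, M ∣ N ^ n) ∧ M * B = t ^ k

variable {N a b f : ℤ} {k : ℕ}

theorem isPowUpTo_pow (N t : ℤ) (k : ℕ) : IsPowUpTo N k (t ^ k) :=
  ⟨1, t, ⟨0, one_dvd _⟩, one_mul _⟩

theorem IsPowUpTo.mul (ha : IsPowUpTo N k a) (hb : IsPowUpTo N k b) : IsPowUpTo N k (a * b) := by
  obtain ⟨M, t, ⟨m, hM⟩, h⟩ := ha
  obtain ⟨M', t', ⟨m', hM'⟩, h'⟩ := hb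
  exact ⟨M * M', t * t', ⟨m + m', pow_add N m m' ▸ mul_dvd_mul hM hM'⟩, by
    rw [mul_mul_mul_comm, h, h', mul_pow]⟩

theorem isPowUpTo_mul_iff_of_dvd_pow (hk : k ≠ 0) {m : ℕ} (hf : f ∣ N ^ m) :
    IsPowUpTo N k (f * a) ↔ IsPowUpTo N k a := by
  constructor
  · rintro ⟨M, t, ⟨n, hM⟩, h⟩
    exact ⟨M * f, t, ⟨n + m, pow_add N n m ▸ mul_dvd_mul hM hf⟩, by rw [mul_assoc, h]⟩
  · refine IsPowUpTo.mul ⟨f ^ (k - 1), f, ⟨m * (k - 1), ?_⟩, pow_sub_one_mul hk f⟩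
    rw [pow_mul]
    exact pow_dvd_pow_of_dvd hf _

theorem IsPowUpTo.of_mul_of_isCoprime (h : IsPowUpTo N k (a * b)) (hk : Odd k)
    (hN : IsCoprime N b) (hab : IsCoprime a b) : IsPowUpTo N k a ∧ ∃ e, b = e ^ k := by
  obtain ⟨M, t, ⟨n, hM⟩, h⟩ := h
  have hMb : IsCoprime (M * a) b := (hN.pow_left.of_isCoprime_of_dvd_left hM).mul_left hab
  rw [← mul_assoc] at h
  obtain ⟨⟨c, hc⟩, he⟩ := Int.eq_pow_of_mul_eq_pow_odd hMb hk h
  exact ⟨⟨M, c, ⟨n, hM⟩, hc⟩, he⟩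

end PowUpTo

/-! ### The quintic form -/

section QuinticForm

variable {d p q : ℤ}

theorem isCoprime_quinticForm (hpq : IsCoprime p q) : IsCoprime q (quinticForm d p q) := by
  rw [show quinticForm d p q = p ^ 4 + q * (2 * d * p ^ 2 * q + 5 * q ^ 3) by
    rw [quinticForm]; ring]
  exact (hpq.pow_left.add_mul_left_left _).symm

theorem not_three_dvd_quinticForm (hd : ¬3 ∣ d) (hpq : IsCoprime p q) :
    ¬3 ∣ quinticForm d p q := by
  have hmod : ∀ d p q : ZMod 3, p ^ 4 + 2 * d * p ^ 2 * q ^ 2 + 5 * q ^ 4 = 0 →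
      d = 0 ∨ p = 0 ∧ q = 0 := by decide
  intro h
  have h := (ZMod.intCast_zmod_eq_zero_iff_dvd _ 3).2 h
  rw [quinticForm] at h
  push_cast at h
  rcases hmod d p q h with h | ⟨hp, hq⟩
  · exact hd ((ZMod.intCast_zmod_eq_zero_iff_dvd d 3).1 h)
  · exact Int.prime_three.not_isUnit (hpq.isUnit_of_dvd'
      ((ZMod.intCast_zmod_eq_zero_iff_dvd p 3).1 hp) ((ZMod.intCast_zmod_eq_zero_iff_dvd q 3).1 hq))

theorem not_five_dvd_quinticForm (hp : ¬5 ∣ p) (hd : 5 ∣ d) : ¬5 ∣ quinticForm d p q := by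
  obtain ⟨e, rfl⟩ := hd
  rw [show quinticForm (5 * e) p q = p ^ 4 + 5 * (2 * e * p ^ 2 * q ^ 2 + q ^ 4) by
    rw [quinticForm]; ring, Int.dvd_add_left (dvd_mul_right 5 _)]
  exact fun h => hp (int_prime_five.dvd_of_dvd_pow h)

theorem quinticForm_eq (hd : d ^ 2 = 25) (p q : ℤ) :
    quinticForm d p q = (p ^ 2 + d * q ^ 2) ^ 2 - 5 * (2 * q ^ 2) ^ 2 := by
  rw [quinticForm]
  linear_combination (-q ^ 4) * hd

end QuinticForm

/-! ### The descent -/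

section Descent

/-- The data on which the descent runs: a norm `A ^ 2 - 5 * B ^ 2` from `ℤ[√5]` which is an odd
fifth power, with coprime `A`, `B`, and `B` a nonzero multiple of `25` that is a fifth power up to
the primes `2`, `3`, `5`. -/
structure DescentPair (A B : ℤ) : Prop where
  isCoprime : IsCoprime A B
  exists_pow_five_eq : ∃ e, A ^ 2 - 5 * B ^ 2 = e ^ 5
  odd : Odd (A ^ 2 - 5 * B ^ 2)
  dvd : 25 ∣ B
  ne_zero : B ≠ 0
  isPowUpTo : IsPowUpTo 30 5 B

theorem isCoprime_thirty {n : ℤ} (h2 : Odd n) (h3 : ¬3 ∣ n) (h5 : ¬5 ∣ n) : IsCoprime 30 n := by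
  rw [show (30 : ℤ) = 2 * (3 * 5) by norm_num]
  exact (Int.isCoprime_two_left.2 h2).mul_left
    ((Int.prime_three.coprime_iff_not_dvd.2 h3).mul_left (int_prime_five.coprime_iff_not_dvd.2 h5))

theorem isCoprime_of_isCoprime_sq_sub {d A B : ℤ} (h : IsCoprime B (A ^ 2 - d * B ^ 2)) :
    IsCoprime A B := by
  rw [show A ^ 2 - d * B ^ 2 = A ^ 2 + B * (-(d * B)) by ring] at h
  exact (IsCoprime.pow_left_iff two_pos).1 h.of_add_mul_left_right.symm

theorem DescentPair.of_isPowUpTo {d p q c A B : ℤ} (hd : d = 5 ∨ d = -5) (hpq : IsCoprime p q)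
    (hp : ¬5 ∣ p) (hq5 : 5 ∣ q) (hq : q ≠ 0) (hc : c ∣ 2) (hA : c * A = p ^ 2 + d * q ^ 2)
    (hB : c * B = 2 * q ^ 2) (hodd : Odd (A ^ 2 - 5 * B ^ 2))
    (hpow : IsPowUpTo 30 5 (q * quinticForm d p q)) : DescentPair A B := by
  have hd25 : d ^ 2 = 25 := by rcases hd with rfl | rfl <;> norm_num
  have hform : quinticForm d p q = c ^ 2 * (A ^ 2 - 5 * B ^ 2) := by
    rw [quinticForm_eq hd25, ← hA, ← hB]
    ring
  set E := A ^ 2 - 5 * B ^ 2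
  have hE : E ∣ quinticForm d p q := ⟨c ^ 2, by rw [hform, mul_comm]⟩
  have h30E : IsCoprime 30 E := isCoprime_thirty hodd
    (fun h => not_three_dvd_quinticForm (by omega) hpq (h.trans hE))
    (fun h => not_five_dvd_quinticForm hp (by omega) (h.trans hE))
  have hqE : IsCoprime q E := (isCoprime_quinticForm hpq).of_isCoprime_of_dvd_right hE
  have h2E : IsCoprime 2 E := Int.isCoprime_two_left.2 hodd
  have hc30 : c ∣ 30 ^ 1 := hc.trans (by norm_num)
  rw [hform, ← mul_assoc, mul_comm q] at hpow
  obtain ⟨hcq, e, he⟩ := hpow.of_mul_of_isCoprime (by decide) h30E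
    ((h2E.of_isCoprime_of_dvd_left hc).pow_left.mul_left hqE)
  have hq30 : IsPowUpTo 30 5 q :=
    (isPowUpTo_mul_iff_of_dvd_pow (by norm_num) (pow_dvd_pow_of_dvd hc 2 |>.trans
      (by norm_num : (2 : ℤ) ^ 2 ∣ 30 ^ 2))).1 hcq
  have hB0 : c * B ≠ 0 := hB ▸ mul_ne_zero two_ne_zero (pow_ne_zero 2 hq)
  refine ⟨isCoprime_of_isCoprime_sq_sub (d := 5) ?_, ⟨e, he⟩, hodd, ?_,
    right_ne_zero_of_mul hB0, ?_⟩
  · exact (h2E.mul_left hqE.pow_left).of_isCoprime_of_dvd_left (hB ▸ dvd_mul_left B c)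
  · have h25 : 25 ∣ c * B := hB ▸ (pow_dvd_pow_of_dvd hq5 2).mul_left 2
    have h25c : IsCoprime 25 c :=
      (Int.isCoprime_iff_gcd_eq_one.2 rfl : IsCoprime (25 : ℤ) 2).of_isCoprime_of_dvd_right hc
    exact h25c.dvd_of_dvd_mul_left h25
  · rw [← isPowUpTo_mul_iff_of_dvd_pow (by norm_num) hc30, hB,
      isPowUpTo_mul_iff_of_dvd_pow (by norm_num) (by norm_num : (2 : ℤ) ∣ 30 ^ 1), sq]
    exact hq30.mul hq30

theorem re_dvd_re_pow_five {d : ℤ} (α : ℤ√d) : α.re ∣ (α ^ 5).re := by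
  refine ⟨α.re ^ 4 + 10 * d * α.re ^ 2 * α.im ^ 2 + 5 * d ^ 2 * α.im ^ 4, ?_⟩
  simp only [pow_succ, pow_zero, one_mul, Zsqrtd.re_mul, Zsqrtd.im_mul]
  ring

theorem odd_quinticForm_five {p q : ℤ} (h : Odd ((⟨p, q⟩ : ℤ√5) ^ 5).norm) :
    Odd (quinticForm 5 p q) := by
  have hodd : Odd (p ^ 2 - 5 * q ^ 2) := by
    have hnorm : ((⟨p, q⟩ : ℤ√5) ^ 5).norm = (p ^ 2 - 5 * q ^ 2) ^ 5 := by
      rw [show p ^ 2 - 5 * q ^ 2 = (⟨p, q⟩ : ℤ√5).norm by rw [Zsqrtd.norm_def]; ring]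
      exact map_pow Zsqrtd.normMonoidHom _ 5
    rwa [hnorm, Int.odd_pow' (by norm_num)] at h
  rw [show quinticForm 5 p q = (p ^ 2 - 5 * q ^ 2) ^ 2 + 2 * (10 * p ^ 2 * q ^ 2 - 10 * q ^ 4) by
    rw [quinticForm]; ring]
  exact hodd.pow.add_even (even_two_mul _)

theorem sq_le_quinticForm_five (p q : ℤ) : q ^ 2 ≤ quinticForm 5 p q :=
  calc q ^ 2 ≤ q ^ 4 := by nlinarith [sq_nonneg (q ^ 2 - 1), sq_nonneg q]
    _ ≤ quinticForm 5 p q := by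
      rw [quinticForm]
      nlinarith [sq_nonneg (p ^ 2), sq_nonneg (p * q), sq_nonneg (q ^ 2)]

theorem natAbs_two_mul_sq_lt {q : ℤ} (p : ℤ) (hq : q ≠ 0) :
    (2 * q ^ 2).natAbs < (5 * (q * quinticForm 5 p q)).natAbs := by
  have hpos : 0 < q ^ 2 := by positivity
  have hQ := sq_le_quinticForm_five p q
  have hle : 1 * q ^ 2 ≤ |q| * quinticForm 5 p q :=
    mul_le_mul (Int.one_le_abs hq) hQ hpos.le (abs_nonneg q)
  zify
  rw [abs_mul, abs_mul, abs_mul, abs_of_pos hpos, abs_of_pos (hpos.trans_le hQ)]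
  rw [Nat.abs_ofNat, Nat.abs_ofNat]
  linarith

theorem DescentPair.exists_natAbs_lt {A B : ℤ} (h : DescentPair A B) :
    ∃ A' B', DescentPair A' B' ∧ B'.natAbs < B.natAbs := by
  obtain ⟨e, he⟩ := h.exists_pow_five_eq
  have h5B : 5 ∣ B := (by norm_num : (5 : ℤ) ∣ 25).trans h.dvd
  have hodd := h.odd
  rw [he, Int.odd_pow' (by norm_num)] at hodd
  obtain ⟨⟨p, q⟩, hα⟩ := exists_pow_five_eq_mk_of_five_dvd h.isCoprime he hodd h5B
  obtain ⟨hA, hB⟩ : A = _ ∧ B = _ := Zsqrtd.ext_iff.1 hα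
  rw [im_pow_five (by norm_num)] at hB
  dsimp only at hB
  have hpA : p ∣ A := hA ▸ re_dvd_re_pow_five _
  have hqB : q ∣ B := hB ▸ (dvd_mul_right q _).mul_left 5
  have hp5 : ¬5 ∣ p := fun hp =>
    int_prime_five.not_isUnit (h.isCoprime.isUnit_of_dvd' (hp.trans hpA) h5B)
  have hq5 : 5 ∣ q := by
    have h25 : 5 * 5 ∣ 5 * (q * quinticForm 5 p q) := hB ▸ h.dvd
    exact (int_prime_five.dvd_or_dvd (Int.dvd_of_mul_dvd_mul_left (by norm_num) h25)).resolve_right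
      (not_five_dvd_quinticForm hp5 dvd_rfl)
  have hq : q ≠ 0 := fun h0 => h.ne_zero (zero_dvd_iff.1 (h0 ▸ hqB))
  have hQ : Odd (quinticForm 5 p q) := odd_quinticForm_five <| by
    rw [← hα, show (⟨A, B⟩ : ℤ√5).norm = A ^ 2 - 5 * B ^ 2 by rw [Zsqrtd.norm_def]; ring]
    exact h.odd
  have hpow : IsPowUpTo 30 5 (q * quinticForm 5 p q) :=
    (isPowUpTo_mul_iff_of_dvd_pow (m := 1) (by norm_num) (by norm_num)).1 (hB ▸ h.isPowUpTo)
  refine ⟨p ^ 2 + 5 * q ^ 2, 2 * q ^ 2, ?_, hB ▸ natAbs_two_mul_sq_lt p hq⟩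
  exact .of_isPowUpTo (d := 5) (c := 1) (.inl rfl)
    ((h.isCoprime.of_isCoprime_of_dvd_left hpA).of_isCoprime_of_dvd_right hqB) hp5 hq5 hq
    (one_dvd 2) (one_mul _) (one_mul _) (quinticForm_eq (d := 5) (by norm_num) p q ▸ hQ) hpow

theorem not_descentPair (A B : ℤ) : ¬DescentPair A B := by
  induction hn : B.natAbs using Nat.strong_induction_on generalizing A B with
  | _ n ih =>
    intro h
    obtain ⟨A', B', h', hlt⟩ := h.exists_natAbs_lt
    exact ih _ (hn ▸ hlt) A' B' rfl h'

end Descent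

/-! ### Solutions with `3 ∤ s` -/

section NotThreeDvd

theorem gcd_re_im_pow_dvd {d : ℤ} (α : ℤ√d) (k : ℕ) :
    Int.gcd α.re α.im ^ k ∣ Int.gcd (α ^ k).re (α ^ k).im := by
  have hα : ((Int.gcd α.re α.im : ℤ) : ℤ√d) ∣ α :=
    (Zsqrtd.intCast_dvd _ _).2 ⟨Int.gcd_dvd_left _ _, Int.gcd_dvd_right _ _⟩
  have hpow := pow_dvd_pow_of_dvd hα k
  rw [← Int.cast_pow, Zsqrtd.intCast_dvd] at hpow
  exact_mod_cast Int.dvd_coe_gcd hpow.1 hpow.2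

theorem isCoprime_of_gcd_pow_five_dvd_four {d : ℤ} {α : ℤ√d}
    (h : Int.gcd (α ^ 5).re (α ^ 5).im ∣ 4) : IsCoprime α.re α.im := by
  rw [Int.isCoprime_iff_gcd_eq_one]
  have hdvd := (gcd_re_im_pow_dvd α 5).trans h
  have hlt : Int.gcd α.re α.im < 2 :=
    lt_of_pow_lt_pow_left₀ 5 two_pos.le <|
      (Nat.le_of_dvd four_pos hdvd).trans_lt (by norm_num)
  have hne : Int.gcd α.re α.im ≠ 0 := fun h0 => by norm_num [h0] at hdvd
  omega

theorem exists_descentPair {u v : ℤ} (huv : IsCoprime u v) (hu : ¬5 ∣ u) (hv5 : 5 ∣ v)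
    (hv : v ≠ 0) (hpow : IsPowUpTo 30 5 (v * quinticForm (-5) u v)) :
    ∃ A B, DescentPair A B := by
  rcases Int.even_or_odd (u ^ 2 + -5 * v ^ 2) with heven | hodd
  · have hnot := not_even_and_even_of_isCoprime huv
    have hu2 := sq_emod_four u
    have hv2 := sq_emod_four v
    rw [Int.even_iff] at heven
    rw [Int.even_iff, Int.even_iff] at hnot
    obtain ⟨m, hm⟩ : 4 ∣ u ^ 2 + -5 * v ^ 2 := by omega
    have hvodd : Odd v := Int.odd_iff.2 (by omega)
    refine ⟨2 * m, v ^ 2, .of_isPowUpTo (.inr rfl) huv hu hv5 hv dvd_rfl (by rw [hm]; ring) rfl ?_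
      hpow⟩
    exact (Even.pow_of_ne_zero (even_two_mul m) two_ne_zero).sub_odd
      ((by decide : Odd (5 : ℤ)).mul hvodd.pow.pow)
  · refine ⟨u ^ 2 + -5 * v ^ 2, 2 * v ^ 2, .of_isPowUpTo (.inr rfl) huv hu hv5 hv (one_dvd 2)
      (one_mul _) (one_mul _) ?_ hpow⟩
    exact hodd.pow.sub_even (((even_two_mul _).pow_of_ne_zero two_ne_zero).mul_left 5)

theorem isCoprime_of_sq_add_mul_eq_pow {r s m k : ℤ} {n : ℕ} (h : r ^ 2 + m * k = s ^ n)
    (hs : IsCoprime s m) : IsCoprime r m := by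
  have hr : IsCoprime (r ^ 2 + m * k) m := h ▸ hs.pow_left
  exact (IsCoprime.pow_left_iff two_pos).1 hr.of_add_mul_left_left

theorem gcd_four_mul_dvd_four {r y : ℤ} (h : IsCoprime r y) : Int.gcd r (4 * y) ∣ 4 := by
  rw [Int.gcd_mul_left_right_of_gcd_eq_one (Int.isCoprime_iff_gcd_eq_one.1 h)]
  exact_mod_cast Int.gcd_dvd_right r 4

theorem sq_add_ne_pow_five_of_not_three_dvd {r s w : ℤ} (hsw : IsCoprime s w) (h3 : ¬3 ∣ s)
    (h5 : ¬5 ∣ s) (hw : w ≠ 0) : r ^ 2 + 5 * (4 * (375 * w ^ 5)) ^ 2 ≠ s ^ 5 := by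
  intro h
  have hs : IsCoprime s (375 * w ^ 5) := by
    rw [show (375 : ℤ) = 3 * 5 ^ 3 by norm_num]
    exact ((Int.prime_three.coprime_iff_not_dvd.2 h3).symm.mul_right
      (int_prime_five.coprime_iff_not_dvd.2 h5).symm.pow_right).mul_right hsw.pow_right
  have hr : IsCoprime r (375 * w ^ 5) :=
    isCoprime_of_sq_add_mul_eq_pow (k := 80 * (375 * w ^ 5)) (by rw [← h]; ring) hs
  have hgcd := gcd_four_mul_dvd_four hr
  obtain ⟨α, hα⟩ := exists_pow_five_eq_mk_of_gcd_dvd_four hgcd h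
  obtain ⟨hre, him⟩ : r = (α ^ 5).re ∧ 4 * (375 * w ^ 5) = (α ^ 5).im := Zsqrtd.ext_iff.1 hα
  have huv : IsCoprime α.re α.im := isCoprime_of_gcd_pow_five_dvd_four (hre ▸ him ▸ hgcd)
  have hu : ¬5 ∣ α.re := fun hu => int_prime_five.not_isUnit
    (hr.isUnit_of_dvd' (hre ▸ hu.trans (re_dvd_re_pow_five α)) ⟨75 * w ^ 5, by ring⟩)
  have hvQ : α.im * quinticForm (-5) α.re α.im = 300 * w ^ 5 := by
    rw [im_pow_five (by norm_num)] at him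
    linarith
  have hne : α.im * quinticForm (-5) α.re α.im ≠ 0 := by
    rw [hvQ]
    positivity
  have hv5 : 5 ∣ α.im := by
    have hdvd : 5 ∣ α.im * quinticForm (-5) α.re α.im := hvQ ▸ ⟨60 * w ^ 5, by ring⟩
    exact (int_prime_five.dvd_or_dvd hdvd).resolve_right
      (not_five_dvd_quinticForm hu (by norm_num))
  have hpow : IsPowUpTo 30 5 (α.im * quinticForm (-5) α.re α.im) := by
    rw [hvQ, isPowUpTo_mul_iff_of_dvd_pow (m := 3) (by norm_num) (by norm_num)]
    exact isPowUpTo_pow 30 w 5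
  obtain ⟨A, B, hAB⟩ := exists_descentPair huv hu hv5 (left_ne_zero_of_mul hne) hpow
  exact not_descentPair A B hAB

end NotThreeDvd

/-! ### Solutions with `3 ∣ s` -/

section ThreeDvd

theorem five_dvd_add_two_mul {r y s : ℤ} (hgcd : Int.gcd r y ∣ 4) (h3 : ¬3 ∣ r + 2 * y)
    (h : r ^ 2 + 5 * y ^ 2 = 27 * s ^ 5) : 5 ∣ r + 2 * y := by
  have hgcd' : Int.gcd (2 * r - 5 * y) (r + 2 * y) ∣ 4 := by
    refine Dvd.dvd.trans ?_ hgcd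
    set g := Int.gcd (2 * r - 5 * y) (r + 2 * y)
    have hl : (g : ℤ) ∣ 2 * r - 5 * y := Int.gcd_dvd_left _ _
    have hr : (g : ℤ) ∣ r + 2 * y := Int.gcd_dvd_right _ _
    have hg9 : IsCoprime (g : ℤ) (3 ^ 2) :=
      ((Int.prime_three.coprime_iff_not_dvd.2 fun h => h3 (h.trans hr)).symm).pow_right
    have hgr : (g : ℤ) ∣ r := hg9.dvd_of_dvd_mul_left <| by
      rw [show 3 ^ 2 * r = (2 * r - 5 * y) * 2 + (r + 2 * y) * 5 by ring]
      exact dvd_add (hl.mul_right 2) (hr.mul_right 5)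
    have hgy : (g : ℤ) ∣ y := hg9.dvd_of_dvd_mul_left <| by
      rw [show 3 ^ 2 * y = (r + 2 * y) * 2 - (2 * r - 5 * y) by ring]
      exact dvd_sub (hr.mul_right 2) hl
    exact_mod_cast Int.dvd_coe_gcd hgr hgy
  obtain ⟨α, hα⟩ := exists_pow_five_eq_mk_of_gcd_dvd_four (n := 3 * s) hgcd' (by
    linear_combination 9 * h)
  obtain ⟨-, him⟩ := Zsqrtd.ext_iff.1 hα
  exact ⟨_, him.trans (im_pow_five (by norm_num) α)⟩

theorem five_dvd_add_or_sub_two_mul {r y s : ℤ} (hgcd : Int.gcd r y ∣ 4)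
    (h : r ^ 2 + 5 * y ^ 2 = 27 * s ^ 5) : 5 ∣ r + 2 * y ∨ 5 ∣ r - 2 * y := by
  by_cases hadd : 3 ∣ r + 2 * y
  · have hsub : ¬3 ∣ r + 2 * -y := fun hsub => by
      have h3 : (3 : ℤ) ∣ Int.gcd r y := Int.dvd_coe_gcd (by omega) (by omega)
      exact absurd ((Int.natCast_dvd_natCast.1 h3).trans hgcd) (by norm_num)
    have hdvd := five_dvd_add_two_mul (Int.gcd_neg.symm ▸ hgcd) hsub (by linarith)
    exact .inr (by omega)
  · exact .inl (five_dvd_add_two_mul hgcd hadd h)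

theorem sq_add_ne_pow_five_of_three_dvd {r s w : ℤ} (hsw : IsCoprime s w) (h3 : 3 ∣ s)
    (h5 : ¬5 ∣ s) : r ^ 2 + 5 * (4 * (375 * w ^ 5)) ^ 2 ≠ s ^ 5 := by
  intro h
  have hr : IsCoprime r (125 * w ^ 5) := by
    refine isCoprime_of_sq_add_mul_eq_pow (n := 5) (k := 5 * (12 ^ 2 * (125 * w ^ 5)))
      (by rw [← h]; ring) ?_
    exact (int_prime_five.coprime_iff_not_dvd.2 h5).symm.pow_right (n := 3) |>.mul_right
      hsw.pow_right
  obtain ⟨s, rfl⟩ := h3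
  obtain ⟨r, rfl⟩ : 3 ∣ r := Int.prime_three.dvd_of_dvd_pow (n := 2)
    ⟨81 * s ^ 5 - 5 * (4 * 125 * w ^ 5) * (4 * (375 * w ^ 5)), by linear_combination h⟩
  have hr := hr.of_mul_left_right
  have hr5 : ¬5 ∣ r := fun hdvd =>
    int_prime_five.not_isUnit (hr.isUnit_of_dvd' hdvd ⟨25 * w ^ 5, by ring⟩)
  have := five_dvd_add_or_sub_two_mul (s := s) (gcd_four_mul_dvd_four hr) (by linarith)
  omega

end ThreeDvd

/-! ### Reduction to integers -/

section Reduction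

theorem not_five_dvd_of_sq_add_eq {r m s : ℤ} (hm : ¬5 ∣ m) (h : r ^ 2 + 5 ^ 7 * m = s ^ 5) :
    ¬5 ∣ s := by
  rintro ⟨s, rfl⟩
  obtain ⟨r, rfl⟩ : 5 ^ 2 ∣ r := (Int.pow_dvd_pow_iff two_ne_zero).1
    ⟨5 * s ^ 5 - 5 ^ 3 * m, by linear_combination h⟩
  obtain ⟨r, rfl⟩ : 5 ∣ r := int_prime_five.dvd_of_dvd_pow (n := 2)
    ⟨s ^ 5 - 25 * m, by linarith⟩
  obtain ⟨s, rfl⟩ : 5 ∣ s := int_prime_five.dvd_of_dvd_pow (n := 5)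
    ⟨r ^ 2 + 5 * m, by linarith⟩
  obtain ⟨r, rfl⟩ : 5 ∣ r := int_prime_five.dvd_of_dvd_pow (n := 2)
    ⟨125 * s ^ 5 - m, by linarith⟩
  exact hm ⟨25 * s ^ 5 - r ^ 2, by linarith⟩

theorem sq_add_ne_pow_five {r s w : ℤ} (hsw : IsCoprime s w) (hw : w ≠ 0) :
    r ^ 2 + 5 * (4 * (375 * w ^ 5)) ^ 2 ≠ s ^ 5 := by
  intro h
  have h5 : ¬5 ∣ s := fun hs => by
    have hsplit : r ^ 2 + 5 ^ 7 * (144 * w ^ 10) = s ^ 5 := by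
      rw [← h]
      ring
    refine not_five_dvd_of_sq_add_eq (fun hm => ?_) hsplit hs
    have hw : 5 ∣ w := int_prime_five.dvd_of_dvd_pow
      ((int_prime_five.dvd_or_dvd hm).resolve_left (by norm_num))
    exact int_prime_five.not_isUnit (hsw.isUnit_of_dvd' hs hw)
  by_cases h3 : 3 ∣ s
  · exact sq_add_ne_pow_five_of_three_dvd hsw h3 h5 h
  · exact sq_add_ne_pow_five_of_not_three_dvd hsw h3 h5 hw h

theorem exists_eq_pow_of_sq_eq_pow {a b k : ℕ} (hb : b ≠ 0) (h : a ^ 2 = b ^ (2 * k + 1)) :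
    ∃ w, b = w ^ 2 ∧ a = w ^ (2 * k + 1) := by
  obtain ⟨w, rfl⟩ : b ^ k ∣ a := (Nat.pow_dvd_pow_iff two_ne_zero).1 ⟨b, by rw [h]; ring⟩
  have hbw : b = w ^ 2 :=
    Nat.eq_of_mul_eq_mul_left (pow_pos (Nat.pos_of_ne_zero hb) (2 * k)) (by linear_combination -h)
  exact ⟨w, hbw, by rw [hbw]; ring⟩

theorem exists_int_of_rat_sq_eq_pow_sub {x y : ℚ} {c : ℤ} {k : ℕ}
    (h : y ^ 2 = x ^ (2 * k + 1) - c) :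
    ∃ r s w : ℤ, w ≠ 0 ∧ IsCoprime s w ∧
      r ^ 2 = s ^ (2 * k + 1) - c * (w ^ (2 * k + 1)) ^ 2 := by
  have hden : y.den ^ 2 = x.den ^ (2 * k + 1) := by
    rw [← Rat.den_pow, h, Rat.sub_intCast_den, Rat.den_pow]
  obtain ⟨w, hx, hy⟩ := exists_eq_pow_of_sq_eq_pow x.den_nz hden
  have hw : w ≠ 0 := fun h0 => x.den_nz (by rw [hx, h0, zero_pow two_ne_zero])
  have hcop : IsCoprime x.num (w ^ 2 : ℕ) := hx ▸ Rat.isCoprime_num_den x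
  refine ⟨y.num, x.num, w, mod_cast hw, ?_, ?_⟩
  · rw [Nat.cast_pow] at hcop
    exact (IsCoprime.pow_right_iff two_pos).1 hcop
  · have hW : ((w : ℚ) ^ (2 * k + 1)) ^ 2 ≠ 0 := by positivity
    rw [← Rat.num_div_den x, ← Rat.num_div_den y, hx, hy] at h
    push_cast at h
    rw [div_pow, div_pow, pow_right_comm _ 2, div_eq_iff hW, sub_mul, div_mul_cancel₀ _ hW] at h
    exact_mod_cast h

end Reduction

end QuinticDescent

theorem no_rational_points_case6 (X Y : ℚ) :
    Y ^ 2 ≠ 3 ^ 3 * X ^ 5 - 2 ^ 4 * 5 ^ 7 := by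
  intro h
  have hscaled : (3 * Y) ^ 2 = (3 * X) ^ (2 * 2 + 1) - (11250000 : ℤ) := by
    push_cast
    linear_combination 9 * h
  obtain ⟨r, s, w, hw, hsw, heq⟩ := QuinticDescent.exists_int_of_rat_sq_eq_pow_sub hscaled
  exact QuinticDescent.sq_add_ne_pow_five hsw hw (r := r) (by linear_combination heq)
end
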